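/- arXiv:2211.00766 — 3 statements merged into one kernel-verified Lean document; each statement's English description precedes it below -/
import Mathlib

section
/- For every positive integer k, every finite family P_1, …, P_k of nonzero good polynomials in one variable, and every finite coloring of the positive integers, there exist positive integers x and y such that the k+2 numbers x, x + P_1(y), x + P_2(y), …, x + P_k(y), and x·y all receive the same color. -/
/-!
Color focusing is run twice on piecewise syndetic sets, a partition regular notion preserved by
translations and by dilations with a positive factor.

The additive run proves polynomial van der Waerden in the form: a piecewise syndetic set `A` returns
to itself along any finite family `F` of integer polynomials without constant term, for a piecewise
syndetic set of base points. By compactness, a limit of translates of `A` is syndetic, so finitely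
many translates of it cover `ℤ`, and finite covers of `ℤ` may be considered instead of `A`. Focusing
then reduces `F` to the polynomials `f(X + u) - f(u) - p`, where `f ∈ F`, `u` runs over finitely
many integers and `p ∈ F` has minimal degree; this terminates by PET (polynomial exhaustion)
induction.

In the multiplicative run a color `c` is focused on `B` when, for some `m > 0`, every element of `B`
is `m w` with `w` and all `w + f(m)` of color `c`. If some `m w ∈ B` has color `c`, then `x = w` and
`y = m` solve the problem. If no focused color occurs, shrink `B` to one new color and let it return
to itself at time `y` along `f` and the polynomials `m f(m X)`: since
`m w + m f(m y) = m (w + f(m y))`, the dilate by `y` of the set of base points focuses the old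
colors with multipliers `m y` and the new one with multiplier `y`.
-/

open Polynomial Set

/-- Piecewise syndeticity of a set of integers: for some block length `k`, there are arbitrarily
long intervals such that every block `[b, b + k]` starting in one of them meets `A`. The parameters
are integers to avoid coercions; a negative `k` is impossible. -/
def PiecewiseSyndetic (A : Set ℤ) : Prop :=
  ∃ k : ℤ, ∀ n : ℤ, ∃ a, ∀ b ∈ Icc a (a + n), (A ∩ Icc b (b + k)).Nonempty

theorem piecewiseSyndetic_Ioi (a : ℤ) : PiecewiseSyndetic (Ioi a) :=
  ⟨0, fun _ => ⟨a + 1, fun b ⟨hb, _⟩ => ⟨b, Int.lt_of_add_one_le hb, by simp⟩⟩⟩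

namespace PiecewiseSyndetic

variable {A B : Set ℤ}

theorem of_finite_translates (hB : PiecewiseSyndetic B)
    (h : ∀ T : Finset ℤ, ∃ s, ∀ x ∈ T, x ∈ B → x + s ∈ A) : PiecewiseSyndetic A := by
  obtain ⟨k, hk⟩ := hB
  refine ⟨k, fun n => ?_⟩
  obtain ⟨a, ha⟩ := hk n
  obtain ⟨s, hs⟩ := h (Finset.Icc a (a + n + k))
  refine ⟨a + s, fun b ⟨hab, hbn⟩ => ?_⟩
  obtain ⟨x, hxB, hbx, hxk⟩ := ha (b - s) ⟨by lia, by lia⟩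
  exact ⟨x + s, hs x (Finset.mem_Icc.mpr ⟨by lia, by lia⟩) hxB, by lia, by lia⟩

theorem mono (hB : PiecewiseSyndetic B) (h : B ⊆ A) : PiecewiseSyndetic A :=
  hB.of_finite_translates fun _ => ⟨0, fun x _ hx => by simpa using h hx⟩

theorem preimage_add_right (hA : PiecewiseSyndetic A) (s : ℤ) :
    PiecewiseSyndetic {x | x + s ∈ A} :=
  hA.of_finite_translates fun _ => ⟨-s, fun x _ hx => by simpa using hx⟩

theorem image_mul_left (hA : PiecewiseSyndetic A) {y : ℤ} (hy : 0 < y) :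
    PiecewiseSyndetic ((y * ·) '' A) := by
  obtain ⟨k, hk⟩ := hA
  refine ⟨y * (k + 1), fun n => ?_⟩
  obtain ⟨a, ha⟩ := hk (n + 1)
  refine ⟨y * a, fun b ⟨hab, hbn⟩ => ?_⟩
  have h_lower : a ≤ b / y := (Int.le_ediv_iff_mul_le hy).mpr (by linarith)
  have h_upper : b / y ≤ a + n := by
    rw [← Int.lt_add_one_iff, Int.ediv_lt_iff_lt_mul hy]
    nlinarith
  have h_floor : y * (b / y) ≤ b := Int.mul_ediv_self_le hy.ne'
  have h_ceil : b < y * (b / y + 1) := by linarith [Int.lt_mul_ediv_self_add (x := b) hy]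
  obtain ⟨x, hxA, hbx, hxk⟩ := ha (b / y + 1) ⟨by lia, by lia⟩
  exact ⟨y * x, mem_image_of_mem _ hxA, by nlinarith, by nlinarith⟩

theorem nonempty (hA : PiecewiseSyndetic A) : A.Nonempty := by
  obtain ⟨k, hk⟩ := hA
  obtain ⟨a, ha⟩ := hk 0
  exact (ha a (by simp)).left

theorem of_union (h : PiecewiseSyndetic (A ∪ B)) : PiecewiseSyndetic A ∨ PiecewiseSyndetic B := by
  obtain ⟨k, hk⟩ := h
  by_contra! ⟨hA, hB⟩
  refine hB ⟨k, fun m => ?_⟩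
  obtain ⟨n, h_gap⟩ : ∃ n : ℤ, ∀ a, ∃ b ∈ Icc a (a + n), A ∩ Icc b (b + (m + k)) = ∅ := by
    by_contra! h_no_gap
    exact hA ⟨m + k, h_no_gap⟩
  obtain ⟨a, ha⟩ := hk (n + m)
  obtain ⟨b, ⟨hab, hbn⟩, hb⟩ := h_gap a
  refine ⟨b, fun d ⟨hbd, hdm⟩ => ?_⟩
  obtain ⟨x, hx, hdx, hxk⟩ := ha d ⟨by lia, by lia⟩
  have hxA : x ∉ A := fun hxA => notMem_empty x (hb ▸ ⟨hxA, by lia, by lia⟩)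
  exact ⟨x, hx.resolve_left hxA, hdx, hxk⟩

theorem exists_of_biUnion {ι : Type*} (s : Finset ι) (A : ι → Set ℤ)
    (h : PiecewiseSyndetic (⋃ i ∈ s, A i)) : ∃ i ∈ s, PiecewiseSyndetic (A i) := by
  classical
  induction s using Finset.induction_on with
  | empty => simpa using h.nonempty
  | insert i s _ ih =>
    rw [Finset.set_biUnion_insert] at h
    rcases h.of_union with hi | hs
    · exact ⟨i, Finset.mem_insert_self _ _, hi⟩
    · obtain ⟨j, hj, hA⟩ := ih hs
      exact ⟨j, Finset.mem_insert_of_mem hj, hA⟩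

theorem exists_inter_of_subset_iUnion {κ : Type*} [Finite κ] {A : κ → Set ℤ}
    (hB : PiecewiseSyndetic B) (h : B ⊆ ⋃ c, A c) : ∃ c, PiecewiseSyndetic (B ∩ A c) := by
  have := Fintype.ofFinite κ
  obtain ⟨c, -, hc⟩ := exists_of_biUnion Finset.univ (fun c => B ∩ A c)
    (hB.mono (by simpa [← inter_iUnion] using h))
  exact ⟨c, hc⟩

-- By compactness, some limit of translates of `A` meets every block `[x, x + k]`, say in `x + χ x`.
theorem exists_forall_finset_translate_mem (hA : PiecewiseSyndetic A) :
    ∃ (k : ℤ) (χ : ℤ → Icc 0 k), ∀ T : Finset ℤ, ∃ s, ∀ x ∈ T, x + χ x + s ∈ A := by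
  obtain ⟨k, hk⟩ := hA
  have hk_nonneg : 0 ≤ k := by
    obtain ⟨a, ha⟩ := hk 0
    obtain ⟨x, -, hax, hxk⟩ := ha a (by simp)
    linarith
  have h_window (T : Finset ℤ) : ∃ s, ∀ x, ∃ j : Icc 0 k, x ∈ T → x + j + s ∈ A := by
    obtain ⟨l, hl⟩ := T.bddBelow
    obtain ⟨u, hu⟩ := T.bddAbove
    obtain ⟨a, ha⟩ := hk (u - l)
    refine ⟨a - l, fun x => ?_⟩
    by_cases hx : x ∈ T
    · obtain ⟨z, hzA, hxz, hzk⟩ := ha (x + (a - l)) ⟨by linarith [hl hx], by linarith [hu hx]⟩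
      refine ⟨⟨z - (x + (a - l)), by lia, by lia⟩, fun _ => ?_⟩
      convert hzA using 1
      ring
    · exact ⟨⟨0, le_rfl, hk_nonneg⟩, fun h => absurd h hx⟩
  choose s g hg using h_window
  obtain ⟨χ, hχ⟩ := Finset.rado_selection g
  refine ⟨k, χ, fun T => ?_⟩
  obtain ⟨T', hT, hχT⟩ := hχ T
  exact ⟨s T', fun x hx => hχT x hx ▸ hg T' x (hT hx)⟩

end PiecewiseSyndetic

/-- The points of `A` that stay in `A` when translated by `f(y)`, for each `f ∈ F`. -/
def returnSet (F : Finset ℤ[X]) (A : Set ℤ) (y : ℤ) : Set ℤ :=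
  {x ∈ A | ∀ f ∈ F, x + f.eval y ∈ A}

/-- The conclusion of the polynomial van der Waerden theorem for the family `F`, in the form: every
piecewise syndetic set returns to itself along `F`, at some time `y > 0` and for a piecewise
syndetic set of base points. -/
def IsPolynomiallyRecurrent (F : Finset ℤ[X]) : Prop :=
  ∀ A, PiecewiseSyndetic A → ∃ y > 0, PiecewiseSyndetic (returnSet F A y)

theorem IsPolynomiallyRecurrent.of_finite_cover {F : Finset ℤ[X]}
    (h : ∀ {κ : Type} [Finite κ] (A : κ → Set ℤ), ⋃ c, A c = univ →
      ∃ c, ∃ y > 0, PiecewiseSyndetic (returnSet F (A c) y)) :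
    IsPolynomiallyRecurrent F := by
  intro A hA
  obtain ⟨k, χ, hχ⟩ := hA.exists_forall_finset_translate_mem
  obtain ⟨c, y, hy, hc⟩ := h (fun c => χ ⁻¹' {c}) (iUnion_eq_univ_iff.mpr fun x => ⟨χ x, rfl⟩)
  refine ⟨y, hy, hc.of_finite_translates fun T => ?_⟩
  obtain ⟨s, hs⟩ := hχ (T ∪ (T ×ˢ F).image fun q => q.1 + q.2.eval y)
  refine ⟨c + s, fun x hx ⟨hxc, hxF⟩ => ⟨?_, fun f hf => ?_⟩⟩
  · have := hs x (Finset.mem_union_left _ hx)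
    rwa [show χ x = c from hxc, add_assoc] at this
  · have := hs (x + f.eval y) (Finset.mem_union_right _
      (Finset.mem_image_of_mem (fun q : ℤ × ℤ[X] => q.1 + q.2.eval y)
        (Finset.mk_mem_product hx hf)))
    rw [show χ (x + f.eval y) = c from hxF f hf] at this
    convert this using 1
    ring

theorem IsPolynomiallyRecurrent.of_erase_zero {F : Finset ℤ[X]}
    (h : IsPolynomiallyRecurrent (F.erase 0)) : IsPolynomiallyRecurrent F := by
  intro A hA
  obtain ⟨y, hy, hD⟩ := h A hA
  refine ⟨y, hy, hD.mono fun x ⟨hxA, hxF⟩ => ⟨hxA, fun f hf => ?_⟩⟩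
  obtain rfl | hf₀ := eq_or_ne f 0
  · simpa using hxA
  · exact hxF f (Finset.mem_erase.mpr ⟨hf₀, hf⟩)

section PET

variable {R : Type*} [CommRing R]

/-- The polynomial `f(X + u) - f(u) - p` by which PET induction replaces `f`. -/
noncomputable def petDifference (p f : R[X]) (u : R) : R[X] :=
  taylor u f - C (f.eval u) - p

theorem eval_petDifference (p f : R[X]) (u y : R) :
    (petDifference p f u).eval y = f.eval (y + u) - f.eval u - p.eval y := by
  simp [petDifference, taylor_eval]

theorem coeff_zero_petDifference {p : R[X]} (hp : p.coeff 0 = 0) (f : R[X]) (u : R) :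
    (petDifference p f u).coeff 0 = 0 := by
  simp [petDifference, taylor_coeff_zero, hp]

theorem natDegree_petDifference_le (p f : R[X]) (u : R) :
    (petDifference p f u).natDegree ≤ max f.natDegree p.natDegree := by
  calc (petDifference p f u).natDegree
      ≤ max (taylor u f - C (f.eval u)).natDegree p.natDegree := natDegree_sub_le _ _
    _ = max f.natDegree p.natDegree := by rw [natDegree_sub_C, natDegree_taylor]

theorem natDegree_petDifference_of_lt {p f : R[X]} (h : p.natDegree < f.natDegree) (u : R) :
    (petDifference p f u).natDegree = f.natDegree := by
  have hdeg : (taylor u f - C (f.eval u)).natDegree = f.natDegree := by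
    rw [natDegree_sub_C, natDegree_taylor]
  rw [petDifference, natDegree_sub_eq_left_of_natDegree_lt (hdeg ▸ h), hdeg]

theorem coeff_natDegree_petDifference {f : R[X]} (hf : 0 < f.natDegree) (p : R[X]) (u : R) :
    (petDifference p f u).coeff f.natDegree = f.leadingCoeff - p.coeff f.natDegree := by
  simp only [petDifference, coeff_sub, coeff_taylor_natDegree, coeff_C_of_ne_zero hf.ne', sub_zero]

theorem leadingCoeff_petDifference_of_lt {p f : R[X]} (h : p.natDegree < f.natDegree) (u : R) :
    (petDifference p f u).leadingCoeff = f.leadingCoeff := by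
  rw [leadingCoeff, natDegree_petDifference_of_lt h, coeff_natDegree_petDifference (by lia),
    coeff_eq_zero_of_natDegree_lt h, sub_zero]

variable [DecidableEq R]

/-- The family to which PET induction reduces `F`: the nonzero `f(X + u) - f(u) - p` with
`f ∈ F` and `u ∈ H`. -/
noncomputable def petDerivative (F : Finset R[X]) (p : R[X]) (H : Finset R) : Finset R[X] :=
  ((F ×ˢ H).image fun q => petDifference p q.1 q.2).erase 0

theorem mem_petDerivative {F : Finset R[X]} {p : R[X]} {H : Finset R} {g : R[X]} :
    g ∈ petDerivative F p H ↔ g ≠ 0 ∧ ∃ f ∈ F, ∃ u ∈ H, petDifference p f u = g := by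
  simp only [petDerivative, Finset.mem_erase, Finset.mem_image, Finset.mem_product, Prod.exists,
    and_assoc, exists_and_left]

/-- The leading coefficients of the members of `F` of degree `d`. -/
def leadingCoeffs (F : Finset R[X]) (d : ℕ) : Finset R :=
  (F.filter fun f => f.natDegree = d).image leadingCoeff

theorem mem_leadingCoeffs {F : Finset R[X]} {d : ℕ} {c : R} :
    c ∈ leadingCoeffs F d ↔ ∃ f ∈ F, f.natDegree = d ∧ f.leadingCoeff = c := by
  simp only [leadingCoeffs, Finset.mem_image, Finset.mem_filter, and_assoc]

/-- The weight of a family in PET induction: the number of leading coefficients in each degree,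
compared at the largest degree where two families differ. -/
noncomputable def petWeight (F : Finset R[X]) : Colex (ℕ →₀ ℕ) :=
  toColex <| Finsupp.onFinset (F.image natDegree) (fun d => (leadingCoeffs F d).card) fun d hd => by
    obtain ⟨c, hc⟩ := Finset.card_ne_zero.mp hd
    obtain ⟨f, hf, rfl, -⟩ := mem_leadingCoeffs.mp hc
    exact Finset.mem_image_of_mem _ hf

theorem leadingCoeffs_petDerivative_of_lt (F : Finset R[X]) {p : R[X]} {H : Finset R}
    (hH : H.Nonempty) {d : ℕ} (hd : p.natDegree < d) :
    leadingCoeffs (petDerivative F p H) d = leadingCoeffs F d := by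
  ext c
  simp only [mem_leadingCoeffs, mem_petDerivative]
  constructor
  · rintro ⟨_, ⟨-, f, hf, u, -, rfl⟩, hdeg, rfl⟩
    have hlt : p.natDegree < f.natDegree := by
      have := natDegree_petDifference_le p f u
      lia
    exact ⟨f, hf, (natDegree_petDifference_of_lt hlt u).symm.trans hdeg,
      (leadingCoeff_petDifference_of_lt hlt u).symm⟩
  · rintro ⟨f, hf, rfl, rfl⟩
    obtain ⟨u, hu⟩ := hH
    have hdeg := natDegree_petDifference_of_lt hd u
    exact ⟨_, ⟨ne_zero_of_natDegree_gt (hd.trans_eq hdeg.symm), f, hf, u, hu, rfl⟩, hdeg,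
      leadingCoeff_petDifference_of_lt hd u⟩

theorem leadingCoeffs_petDerivative_subset {F : Finset R[X]} {p : R[X]} (hp : 0 < p.natDegree)
    (hmin : ∀ f ∈ F, p.natDegree ≤ f.natDegree) (H : Finset R) :
    leadingCoeffs (petDerivative F p H) p.natDegree ⊆
      ((leadingCoeffs F p.natDegree).erase p.leadingCoeff).image (· - p.leadingCoeff) := by
  intro c hc
  obtain ⟨g, hg, hdeg, rfl⟩ := mem_leadingCoeffs.mp hc
  obtain ⟨hg₀, f, hf, u, -, rfl⟩ := mem_petDerivative.mp hg
  have hfp : f.natDegree = p.natDegree := by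
    refine le_antisymm (not_lt.mp fun hlt => ?_) (hmin f hf)
    exact hlt.ne (hdeg.symm.trans (natDegree_petDifference_of_lt hlt u))
  have hlead : (petDifference p f u).leadingCoeff = f.leadingCoeff - p.leadingCoeff := by
    rw [leadingCoeff, hdeg, ← hfp, coeff_natDegree_petDifference (hfp ▸ hp), hfp, coeff_natDegree]
  refine Finset.mem_image.mpr ⟨f.leadingCoeff, Finset.mem_erase.mpr ⟨fun heq => hg₀ ?_,
    mem_leadingCoeffs.mpr ⟨f, hf, hfp, rfl⟩⟩, hlead.symm⟩
  rw [← leadingCoeff_eq_zero, hlead, heq, sub_self]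

theorem petWeight_petDerivative_lt {F : Finset R[X]} {p : R[X]} (hpF : p ∈ F)
    (hp : 0 < p.natDegree) (hmin : ∀ f ∈ F, p.natDegree ≤ f.natDegree) {H : Finset R}
    (hH : H.Nonempty) : petWeight (petDerivative F p H) < petWeight F := by
  refine Finsupp.Colex.lt_iff.mpr ⟨p.natDegree, fun d hd => ?_, ?_⟩
  · exact congrArg Finset.card (leadingCoeffs_petDerivative_of_lt F hH hd)
  · have hmem : p.leadingCoeff ∈ leadingCoeffs F p.natDegree :=
      mem_leadingCoeffs.mpr ⟨p, hpF, rfl, rfl⟩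
    calc (leadingCoeffs (petDerivative F p H) p.natDegree).card
        ≤ ((leadingCoeffs F p.natDegree).erase p.leadingCoeff).card :=
          (Finset.card_le_card (leadingCoeffs_petDerivative_subset hp hmin H)).trans
            Finset.card_image_le
      _ < (leadingCoeffs F p.natDegree).card := Finset.card_erase_lt_of_mem hmem

end PET

theorem IsPolynomiallyRecurrent.exists_piecewiseSyndetic_of_petDerivative {F : Finset ℤ[X]}
    {p : ℤ[X]} {H : Finset ℤ} (h : IsPolynomiallyRecurrent (petDerivative F p H)) {B : Set ℤ}
    (hB : PiecewiseSyndetic B) :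
    ∃ y > 0, PiecewiseSyndetic {x | ∀ f ∈ F, ∀ u ∈ H, x + (f.eval (y + u) - f.eval u) ∈ B} := by
  obtain ⟨y, hy, hD⟩ := h B hB
  refine ⟨y, hy, (hD.preimage_add_right (p.eval y)).mono fun x ⟨hxB, hx⟩ f hf u hu => ?_⟩
  have h_eval : x + (f.eval (y + u) - f.eval u) =
      x + p.eval y + (petDifference p f u).eval y := by
    rw [eval_petDifference]
    ring
  rw [h_eval]
  by_cases hg : petDifference p f u = 0
  · simpa [hg] using hxB
  · exact hx _ (mem_petDerivative.mpr ⟨hg, f, hf, u, hu, rfl⟩)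

section AdditiveFocusing

variable {κ : Type*} {F : Finset ℤ[X]} {A : κ → Set ℤ} {B B' : Set ℤ} {c : κ} {S : Set κ}

/-- Additive color focusing: every color `t ∈ S` has a step `d > 0` for which all `x + f(d)` with
`x ∈ B` and `f ∈ F` lie in the color class `A t`. -/
def FocusesAdd (F : Finset ℤ[X]) (A : κ → Set ℤ) (B : Set ℤ) (S : Set κ) : Prop :=
  ∀ t ∈ S, ∃ d > 0, ∀ x ∈ B, ∀ f ∈ F, x + f.eval d ∈ A t

theorem FocusesAdd.anti (hS : FocusesAdd F A B S) (h : B' ⊆ B) : FocusesAdd F A B' S := by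
  intro t ht
  obtain ⟨d, hd, hBd⟩ := hS t ht
  exact ⟨d, hd, fun x hx => hBd x (h hx)⟩

theorem FocusesAdd.exists_insert [Finite κ] {p : ℤ[X]} (hF : ∀ f ∈ F, f.coeff 0 = 0)
    (h : ∀ H : Finset ℤ, H.Nonempty → IsPolynomiallyRecurrent (petDerivative F p H))
    (hB : PiecewiseSyndetic B) (hBc : B ⊆ A c) (hS : FocusesAdd F A B S) :
    ∃ B', PiecewiseSyndetic B' ∧ FocusesAdd F A B' (insert c S) := by
  choose! d hd_pos hd using hS
  let H : Finset ℤ := insert 0 (S.toFinite.toFinset.image d)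
  obtain ⟨y, hy, hD⟩ :=
    (h H (Finset.insert_nonempty _ _)).exists_piecewiseSyndetic_of_petDerivative hB
  refine ⟨_, hD, ?_⟩
  rintro t (rfl | ht)
  · refine ⟨y, hy, fun x hx f hf => hBc ?_⟩
    have hf₀ : f.eval 0 = 0 := by rw [← coeff_zero_eq_eval_zero, hF f hf]
    simpa [hf₀] using hx f hf 0 (Finset.mem_insert_self _ _)
  · have hdH : d t ∈ H := Finset.mem_insert_of_mem
      (Finset.mem_image_of_mem d (S.toFinite.mem_toFinset.mpr ht))
    refine ⟨y + d t, add_pos hy (hd_pos t ht), fun x hx f hf => ?_⟩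
    simpa [add_assoc] using hd t ht _ (hx f hf (d t) hdH) f hf

theorem exists_piecewiseSyndetic_returnSet_of_petDerivative [Finite κ] {p : ℤ[X]}
    (hF : ∀ f ∈ F, f.coeff 0 = 0)
    (h : ∀ H : Finset ℤ, H.Nonempty → IsPolynomiallyRecurrent (petDerivative F p H))
    (hA : ⋃ c, A c = univ) : ∃ c, ∃ y > 0, PiecewiseSyndetic (returnSet F (A c) y) := by
  let Focused (S : Set κ) : Prop := ∃ B, PiecewiseSyndetic B ∧ FocusesAdd F A B S
  obtain ⟨S, hS⟩ : ∃ S, Maximal Focused S := (toFinite {S | Focused S}).exists_maximal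
    ⟨∅, univ, (piecewiseSyndetic_Ioi 0).mono (subset_univ _), by simp [FocusesAdd]⟩
  obtain ⟨B, hB, hBS⟩ := hS.prop
  obtain ⟨c, hc⟩ := hB.exists_inter_of_subset_iUnion (hA ▸ subset_univ B)
  have hcS : c ∈ S := hS.mem_of_prop_insert <|
    (hBS.anti inter_subset_left).exists_insert hF h hc inter_subset_right
  obtain ⟨d, hd, hBd⟩ := hBS c hcS
  exact ⟨c, d, hd, hc.mono fun x ⟨hxB, hxc⟩ => ⟨hxc, hBd x hxB⟩⟩

end AdditiveFocusing

theorem isPolynomiallyRecurrent_of_zero_notMem {F : Finset ℤ[X]} (hF : ∀ f ∈ F, f.coeff 0 = 0)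
    (h₀ : 0 ∉ F) : IsPolynomiallyRecurrent F := by
  induction hw : petWeight F using WellFoundedLT.induction generalizing F with
  | _ w ih =>
    subst hw
    obtain rfl | hne := F.eq_empty_or_nonempty
    · exact fun A hA => ⟨1, one_pos, by simpa [returnSet] using hA⟩
    obtain ⟨p, hp, hmin⟩ := F.exists_min_image natDegree hne
    have hp_pos : 0 < p.natDegree := by
      refine Nat.pos_of_ne_zero fun hdeg => h₀ ?_
      have hp₀ : p = 0 := by rw [eq_C_of_natDegree_eq_zero hdeg, hF p hp, C_0]
      exact hp₀ ▸ hp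
    refine .of_finite_cover fun A hA =>
      exists_piecewiseSyndetic_returnSet_of_petDerivative (p := p) hF (fun H hH => ?_) hA
    refine ih _ (petWeight_petDerivative_lt hp hp_pos hmin hH) (fun g hg => ?_)
      (Finset.notMem_erase _ _) rfl
    obtain ⟨-, f, -, u, -, rfl⟩ := mem_petDerivative.mp hg
    exact coeff_zero_petDifference (hF p hp) f u

theorem isPolynomiallyRecurrent_of_coeff_zero {F : Finset ℤ[X]} (hF : ∀ f ∈ F, f.coeff 0 = 0) :
    IsPolynomiallyRecurrent F :=
  .of_erase_zero <| isPolynomiallyRecurrent_of_zero_notMem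
    (fun f hf => hF f (Finset.mem_of_mem_erase hf)) (Finset.notMem_erase _ _)

/-- The polynomial `m f(m X)`, along which `m w` returns at time `y` whenever `w` returns along `f`
at time `m y`. -/
noncomputable def dilate {R : Type*} [CommSemiring R] (m : R) (f : R[X]) : R[X] :=
  C m * f.comp (C m * X)

theorem eval_dilate {R : Type*} [CommSemiring R] (m y : R) (f : R[X]) :
    (dilate m f).eval y = m * f.eval (m * y) := by
  simp [dilate]

theorem coeff_zero_dilate {R : Type*} [CommSemiring R] (m : R) {f : R[X]} (hf : f.coeff 0 = 0) :
    (dilate m f).coeff 0 = 0 := by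
  rw [coeff_zero_eq_eval_zero] at hf ⊢
  rw [eval_dilate, mul_zero, hf, mul_zero]

section MultiplicativeFocusing

variable {κ : Type*} {F : Finset ℤ[X]} {A : κ → Set ℤ} {B B' : Set ℤ} {c : κ} {S : Set κ}

/-- Multiplicative color focusing: every color `t ∈ S` has a multiplier `m > 0` such that each
element of `B` is `m w` for some `w` with `w` and all `w + f(m)`, `f ∈ F`, in the color class
`A t`. -/
def FocusesMul (F : Finset ℤ[X]) (A : κ → Set ℤ) (B : Set ℤ) (S : Set κ) : Prop :=
  ∀ t ∈ S, ∃ m > 0, B ⊆ (m * ·) '' returnSet F (A t) m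

theorem FocusesMul.anti (hS : FocusesMul F A B S) (h : B' ⊆ B) : FocusesMul F A B' S := by
  intro t ht
  obtain ⟨m, hm, hBm⟩ := hS t ht
  exact ⟨m, hm, h.trans hBm⟩

theorem FocusesMul.exists_insert [Finite κ] (hF : ∀ f ∈ F, f.coeff 0 = 0)
    (hB : PiecewiseSyndetic B) (hBc : B ⊆ A c) (hS : FocusesMul F A B S) :
    ∃ y > 0, ∃ B' ⊆ B, PiecewiseSyndetic B' ∧ FocusesMul F A ((y * ·) '' B') (insert c S) := by
  choose! m hm_pos hm using hS
  let M : Finset ℤ := insert 1 (S.toFinite.toFinset.image m)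
  obtain ⟨y, hy, hD⟩ := isPolynomiallyRecurrent_of_coeff_zero
    (F := (M ×ˢ F).image fun q => dilate q.1 q.2) (by
      simp only [Finset.forall_mem_image, Finset.mem_product]
      exact fun q hq => coeff_zero_dilate q.1 (hF q.2 hq.2)) B hB
  set D := returnSet ((M ×ˢ F).image fun q => dilate q.1 q.2) B y
  have h_return : ∀ u ∈ D, ∀ a ∈ M, ∀ f ∈ F, u + a * f.eval (a * y) ∈ B := by
    intro u hu a ha f hf
    simpa only [eval_dilate] using
      hu.2 (dilate a f) (Finset.mem_image.mpr ⟨(a, f), Finset.mk_mem_product ha hf, rfl⟩)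
  refine ⟨y, hy, D, sep_subset _ _, hD, ?_⟩
  rintro t (rfl | ht)
  · refine ⟨y, hy, image_mono fun u hu => ⟨hBc hu.1, fun f hf => hBc ?_⟩⟩
    simpa using h_return u hu 1 (Finset.mem_insert_self _ _) f hf
  · have hmM : m t ∈ M := Finset.mem_insert_of_mem
      (Finset.mem_image_of_mem m (S.toFinite.mem_toFinset.mpr ht))
    refine ⟨m t * y, mul_pos (hm_pos t ht) hy, ?_⟩
    rintro _ ⟨u, hu, rfl⟩
    obtain ⟨w, ⟨hw, -⟩, rfl⟩ := hm t ht hu.1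
    refine ⟨w, ⟨hw, fun f hf => ?_⟩, by ring⟩
    obtain ⟨v, ⟨hv, -⟩, hvw⟩ := hm t ht (h_return _ hu (m t) hmM f hf)
    have hv_eq : v = w + f.eval (m t * y) := by
      apply mul_left_cancel₀ (hm_pos t ht).ne'
      linarith
    exact hv_eq ▸ hv

theorem exists_mem_returnSet_mul_mem [Finite κ] (hF : ∀ f ∈ F, f.coeff 0 = 0)
    (hA : Ioi 0 ⊆ ⋃ c, A c) : ∃ c, ∃ x > 0, ∃ y > 0, x ∈ returnSet F (A c) y ∧ x * y ∈ A c := by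
  let Focused (S : Set κ) : Prop := ∃ B ⊆ Ioi 0, PiecewiseSyndetic B ∧ FocusesMul F A B S
  obtain ⟨S, hS⟩ : ∃ S, Maximal Focused S := (toFinite {S | Focused S}).exists_maximal
    ⟨∅, Ioi 0, subset_rfl, piecewiseSyndetic_Ioi 0, by simp [FocusesMul]⟩
  obtain ⟨B, hB_pos, hB, hBS⟩ := hS.prop
  obtain ⟨c, hc⟩ := hB.exists_inter_of_subset_iUnion (hB_pos.trans hA)
  have hcS : c ∈ S := by
    obtain ⟨y, hy, B', hB'B, hB', hfocus⟩ :=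
      (hBS.anti inter_subset_left).exists_insert hF hc inter_subset_right
    refine hS.mem_of_prop_insert ⟨_, ?_, hB'.image_mul_left hy, hfocus⟩
    rintro _ ⟨u, hu, rfl⟩
    exact mul_pos hy (hB_pos (hB'B hu).1)
  obtain ⟨m, hm, hBm⟩ := hBS c hcS
  obtain ⟨_, hzB, hzc⟩ := hc.nonempty
  obtain ⟨w, hw, rfl⟩ := hBm hzB
  exact ⟨c, w, pos_of_mul_pos_right (hB_pos hzB) hm.le, m, hm, hw, mul_comm m w ▸ hzc⟩

end MultiplicativeFocusing

theorem stmt1_general {κ : Type*} [Finite κ] {F : Finset ℤ[X]} (hF : ∀ f ∈ F, f.coeff 0 = 0)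
    (χ : ℤ → κ) :
    ∃ x y : ℤ, 0 < x ∧ 0 < y ∧ (∀ f ∈ F, 0 < x + f.eval y ∧ χ (x + f.eval y) = χ x) ∧
      χ (x * y) = χ x := by
  obtain ⟨_, x, hx, y, hy, ⟨⟨-, rfl⟩, hxF⟩, -, hxy⟩ :=
    exists_mem_returnSet_mul_mem (A := fun c => {z : ℤ | 0 < z ∧ χ z = c}) hF
      fun z (hz : 0 < z) => mem_iUnion.mpr ⟨χ z, hz, rfl⟩
  exact ⟨x, y, hx, hy, hxF, hxy⟩

theorem stmt1 (k : ℕ) (hk : 0 < k) (P : Fin k → Polynomial ℕ)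
    (hP : ∀ i, P i ≠ 0 ∧ (P i).coeff 0 = 0) (n : ℕ) (χ : ℕ → Fin n) :
    ∃ x y : ℕ, 0 < x ∧ 0 < y ∧
      (∀ i, χ (x + (P i).eval y) = χ x) ∧ χ (x * y) = χ x := by
  obtain ⟨x, y, hx, hy, hPχ, hxy⟩ := stmt1_general
    (F := Finset.univ.image fun i => (P i).map (Nat.castRingHom ℤ)) (by simp [hP]) (χ ∘ Int.toNat)
  lift x to ℕ using hx.le
  lift y to ℕ using hy.le
  simp only [Finset.forall_mem_image, eval_natCast_map, Nat.coe_castRingHom] at hPχ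
  exact ⟨x, y, mod_cast hx, mod_cast hy, fun i => mod_cast (hPχ (Finset.mem_univ i)).2,
    mod_cast hxy⟩
end

section
/- For every coloring of T with 3 colors there exist x, y ∈ T such that x, x + y, and x·y all receive the same color. -/
/-- `InT p` means `p` is a nonzero good polynomial in one variable, i.e. an element
of the semiring `T`: nonzero, with nonnegative integer coefficients (automatic over `ℕ`)
and zero constant term. -/
def InT (p : Polynomial ℕ) : Prop := p ≠ 0 ∧ p.coeff 0 = 0

/-!
Color focusing. Suppose that every color `c` of a set `K` comes with a factorization `m p = P` of
one fixed `P ≠ 0` such that `m t z` and `m t z + p` have color `c` for all `z` in a piecewise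
syndetic set `A`; take `t = X` to stay inside `T`. Shrink `A` so that all the products `P t z` have
one color `c₀`. If `c₀ ∈ K`, then `x = m t z` and `y = p` form the pattern, because `x y = P t z`.
If `c₀ ∉ K`, multiple recurrence, which follows from the Hales–Jewett theorem, yields a focused
family for `K ∪ {c₀}`. A maximal `K` therefore yields the pattern.
-/

theorem exists_sum_line_eq_nsmul_add {M α ι : Type*} [AddCommMonoid M] [Fintype ι]
    (f : α → M) (l : Combinatorics.Line α ι) :
    ∃ a ∈ Finset.Icc 1 (Fintype.card ι), ∃ b, ∀ x, ∑ i, f (l x i) = a • f x + b := by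
  classical
  let s : Finset ι := {i | l.idxFun i = none}
  obtain ⟨i₀, hi₀⟩ := l.proper
  have hs : s.Nonempty := ⟨i₀, by simpa [s] using hi₀⟩
  refine ⟨s.card, Finset.mem_Icc.mpr ⟨hs.card_pos, s.card_le_univ⟩,
    ∑ i ∈ sᶜ, ((l.idxFun i).map f).getD 0, fun x ↦ ?_⟩
  rw [← Finset.sum_add_sum_compl s, ← Finset.sum_const]
  congr 1 <;> refine Finset.sum_congr rfl fun i hi ↦ ?_
  · rw [l.apply_none x i (Finset.mem_filter_univ i |>.mp hi)]
  · obtain ⟨y, hy⟩ : ∃ y, l.idxFun i = some y := by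
      simpa [s, ← Option.ne_none_iff_exists'] using hi
    simp [hy]

theorem exists_finset_mono_homothetic_copy {M κ : Type*} [AddCommMonoid M] (S : Finset M)
    (G : Finset κ) :
    ∃ (N : ℕ) (W : Finset M), ∀ C : M → κ, Set.MapsTo C W G →
      ∃ a ∈ Finset.Icc 1 N, ∃ b, ∃ c ∈ G, ∀ s ∈ S, a • s + b ∈ W ∧ C (a • s + b) = c := by
  classical
  obtain ⟨ι, _, hι⟩ := Combinatorics.Line.exists_mono_in_high_dimension S G
  let coordSum (v : ι → S) : M := ∑ i, (v i : M)
  refine ⟨Fintype.card ι, Finset.univ.image coordSum, fun C hC ↦ ?_⟩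
  have coordSum_mem (v) : coordSum v ∈ Finset.univ.image coordSum :=
    Finset.mem_image_of_mem _ (Finset.mem_univ v)
  obtain ⟨l, c, hl⟩ := hι fun v ↦ ⟨C (coordSum v), hC (coordSum_mem v)⟩
  obtain ⟨a, ha, b, hab⟩ := exists_sum_line_eq_nsmul_add Subtype.val l
  refine ⟨a, ha, b, c, c.2, fun s hs ↦ ?_⟩
  rw [← hab ⟨s, hs⟩]
  exact ⟨coordSum_mem _, congrArg Subtype.val (hl ⟨s, hs⟩)⟩

/-- A set is thick if it contains a translate of every finite set. -/
def IsThick {M : Type*} [Add M] (A : Set M) : Prop :=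
  ∀ F : Finset M, ∃ x, ∀ f ∈ F, x + f ∈ A

/-- A set `A` is piecewise syndetic if finitely many of its translates `A - g` cover a thick set.
Piecewise syndetic sets are partition regular and satisfy multiple recurrence. -/
def IsPiecewiseSyndetic {M : Type*} [Add M] (A : Set M) : Prop :=
  ∃ G : Finset M, IsThick {x | ∃ g ∈ G, x + g ∈ A}

theorem isThick_compl_singleton_zero {M : Type*} [AddCommMonoid M] [Infinite M] :
    IsThick ({0}ᶜ : Set M) := by
  intro F
  have hfin : (⋃ f ∈ F, {x : M | x + f = 0}).Finite :=
    F.finite_toSet.biUnion fun f _ ↦ Set.Subsingleton.finite fun x hx y hy ↦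
      left_neg_eq_right_neg hx ((add_comm f y).trans hy)
  obtain ⟨x, hx⟩ := hfin.exists_notMem
  exact ⟨x, by simpa using hx⟩

section AddMonoid

variable {M : Type*} [AddMonoid M] {A B : Set M}

theorem IsThick.isPiecewiseSyndetic (hA : IsThick A) : IsPiecewiseSyndetic A :=
  ⟨{0}, by simpa using hA⟩

namespace IsPiecewiseSyndetic

theorem nonempty (hA : IsPiecewiseSyndetic A) : A.Nonempty := by
  obtain ⟨G, hG⟩ := hA
  obtain ⟨x, hx⟩ := hG {0}
  obtain ⟨g, -, hg⟩ := hx 0 (Finset.mem_singleton_self 0)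
  exact ⟨_, hg⟩

open scoped Pointwise in
theorem of_union (h : IsPiecewiseSyndetic (A ∪ B)) :
    IsPiecewiseSyndetic A ∨ IsPiecewiseSyndetic B := by
  classical
  obtain ⟨G, hG⟩ := h
  by_cases hB : IsPiecewiseSyndetic B
  · exact .inr hB
  obtain ⟨F, hF⟩ : ∃ F : Finset M, ∀ x, ∃ f ∈ F, ∀ g ∈ G, x + f + g ∉ B := by
    simpa [IsPiecewiseSyndetic, IsThick] using not_exists.mp hB G
  refine .inl ⟨F + G, fun H ↦ ?_⟩
  obtain ⟨x, hx⟩ := hG (H + F)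
  refine ⟨x, fun h hh ↦ ?_⟩
  obtain ⟨f, hf, hfB⟩ := hF (x + h)
  obtain ⟨g, hg, hgAB⟩ := hx (h + f) (Finset.add_mem_add hh hf)
  rw [← add_assoc] at hgAB
  refine ⟨f + g, Finset.add_mem_add hf hg, ?_⟩
  rw [← add_assoc]
  exact hgAB.resolve_right (hfB g hg)

theorem exists_of_biUnion {ι : Type*} {s : Finset ι} {A : ι → Set M}
    (h : IsPiecewiseSyndetic (⋃ i ∈ s, A i)) : ∃ i ∈ s, IsPiecewiseSyndetic (A i) := by
  classical
  induction s using Finset.induction_on with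
  | empty => simpa using h.nonempty
  | insert i s _ ih =>
    rw [Finset.set_biUnion_insert] at h
    rcases h.of_union with hi | hs
    · exact ⟨i, Finset.mem_insert_self i s, hi⟩
    · obtain ⟨j, hj, hjA⟩ := ih hs
      exact ⟨j, Finset.mem_insert_of_mem hj, hjA⟩

theorem exists_inter_fiber {κ : Type*} [Finite κ] (hA : IsPiecewiseSyndetic A) (C : M → κ) :
    ∃ c, IsPiecewiseSyndetic (A ∩ C ⁻¹' {c}) := by
  have := Fintype.ofFinite κ
  have cover : ⋃ c ∈ Finset.univ, A ∩ C ⁻¹' {c} = A := by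
    ext z
    simp
  obtain ⟨c, -, hc⟩ := exists_of_biUnion (cover.symm ▸ hA)
  exact ⟨c, hc⟩

end IsPiecewiseSyndetic

end AddMonoid

open scoped Pointwise in
theorem IsPiecewiseSyndetic.exists_recurrence {M : Type*} [AddCommMonoid M] {A S : Set M}
    (hA : IsPiecewiseSyndetic A) (hS : S.Finite) :
    ∃ a > 0, IsPiecewiseSyndetic {z ∈ A | ∀ s ∈ S, z + a • s ∈ A} := by
  classical
  lift S to Finset M using hS
  obtain ⟨G, hG⟩ := hA
  obtain ⟨N, W, hW⟩ := exists_finset_mono_homothetic_copy (insert 0 S) G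
  suffices h : IsPiecewiseSyndetic (⋃ a ∈ Finset.Icc 1 N, {z ∈ A | ∀ s ∈ S, z + a • s ∈ A}) by
    obtain ⟨a, ha, haA⟩ := h.exists_of_biUnion
    exact ⟨a, (Finset.mem_Icc.mp ha).1, haA⟩
  refine ⟨W + G, fun F ↦ ?_⟩
  obtain ⟨x, hx⟩ := hG (F + W)
  refine ⟨x, fun f hf ↦ ?_⟩
  -- Color `w ∈ W` by some `g ∈ G` that moves `x + f + w` into `A`.
  have exists_color (w) (hw : w ∈ W) : ∃ g ∈ G, x + (f + w) + g ∈ A :=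
    hx _ (Finset.add_mem_add hf hw)
  choose! C hCG hCA using exists_color
  obtain ⟨a, ha, b, g, hg, hab⟩ := hW C hCG
  have mem_A (s) (hs : s ∈ insert 0 S) : x + f + (b + g) + a • s ∈ A := by
    obtain ⟨hsW, rfl⟩ := hab s hs
    convert! hCA _ hsW using 1
    abel
  have hbW : b ∈ W := by simpa using (hab 0 (Finset.mem_insert_self 0 S)).1
  refine ⟨b + g, Finset.add_mem_add hbW hg, Set.mem_biUnion ha ⟨?_, fun s hs ↦ ?_⟩⟩
  · simpa using mem_A 0 (Finset.mem_insert_self 0 S)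
  · exact mem_A s (Finset.mem_insert_of_mem hs)

section ColorFocusing

variable {R κ : Type*} [CommSemiring R] {χ : R → κ} {t P : R} {A : Set R} {K : Set κ} {c : κ}

/-- The state of the color-focusing argument. Every color `c ∈ K` comes with a factorization
`m * p = P` such that `m * (t * z)` and `m * (t * z) + p` have color `c` for all `z ∈ A`. The
factor `t` and the condition `t ∣ p` keep the pattern inside the multiples of `t`. -/
structure IsColorFocused (χ : R → κ) (t P : R) (A : Set R) (K : Set κ) : Prop where
  ne_zero : P ≠ 0
  isPiecewiseSyndetic : IsPiecewiseSyndetic A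
  zero_notMem : 0 ∉ A
  exists_factorization : ∀ c ∈ K, ∃ m p, m * p = P ∧ t ∣ p ∧
    ∀ z ∈ A, χ (m * (t * z)) = c ∧ χ (m * (t * z) + p) = c

namespace IsColorFocused

theorem empty [CharZero R] : IsColorFocused χ t 1 {0}ᶜ ∅ where
  ne_zero := one_ne_zero
  isPiecewiseSyndetic := isThick_compl_singleton_zero.isPiecewiseSyndetic
  zero_notMem := by simp
  exists_factorization := by simp

variable [NoZeroDivisors R]

theorem exists_pattern (h : IsColorFocused χ t P A K) (ht : t ≠ 0) (hc : c ∈ K) {z : R}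
    (hz : z ∈ A) (hPz : χ (P * (t * z)) = c) :
    ∃ x y, (x ≠ 0 ∧ t ∣ x) ∧ (y ≠ 0 ∧ t ∣ y) ∧ χ (x + y) = χ x ∧ χ (x * y) = χ x := by
  obtain ⟨m, p, rfl, htp, hmp⟩ := h.exists_factorization c hc
  obtain ⟨hx, hxp⟩ := hmp z hz
  have hz0 : z ≠ 0 := ne_of_mem_of_not_mem hz h.zero_notMem
  have hm : m ≠ 0 := left_ne_zero_of_mul h.ne_zero
  refine ⟨m * (t * z), p, ⟨mul_ne_zero hm (mul_ne_zero ht hz0), (dvd_mul_right t z).mul_left m⟩,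
    ⟨right_ne_zero_of_mul h.ne_zero, htp⟩, hxp.trans hx.symm, ?_⟩
  rw [mul_right_comm, hPz, hx]

theorem exists_insert [CharZero R] [Finite κ] (h : IsColorFocused χ t P A K) (ht : t ≠ 0) :
    ∃ c, (∃ z ∈ A, χ (P * (t * z)) = c) ∧ ∃ P' A', IsColorFocused χ t P' A' (insert c K) := by
  obtain ⟨c, hA'⟩ := h.isPiecewiseSyndetic.exists_inter_fiber fun z ↦ χ (P * (t * z))
  refine ⟨c, hA'.nonempty, ?_⟩
  have factor (d) (hd : d ∈ insert c K) : ∃ m q, m * q = P ∧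
      ∀ z ∈ A ∩ (fun z ↦ χ (P * (t * z))) ⁻¹' {c}, χ (m * (t * z)) = d := by
    rcases hd with rfl | hd
    · exact ⟨P, 1, mul_one P, fun z hz ↦ hz.2⟩
    · obtain ⟨m, p, hmp, -, hχ⟩ := h.exists_factorization d hd
      exact ⟨m, p, hmp, fun z hz ↦ (hχ z hz.1).1⟩
  choose! m q hmq hχ using factor
  obtain ⟨a, ha, hB⟩ := hA'.exists_recurrence (Set.toFinite ((fun d ↦ q d ^ 2) '' insert c K))
  have ha0 : (a : R) ≠ 0 := Nat.cast_ne_zero.mpr ha.ne'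
  refine ⟨P * (a * P * t), _, mul_ne_zero h.ne_zero (mul_ne_zero (mul_ne_zero ha0 h.ne_zero) ht),
    hB, fun h0 ↦ h.zero_notMem h0.1.1, fun d hd ↦ ⟨m d, q d * (a * P * t), ?_, ?_, fun z hz ↦ ?_⟩⟩
  · rw [← mul_assoc, hmq d hd]
  · exact (dvd_mul_left t _).mul_left _
  -- Moving `z` by `a * q ^ 2` moves `m * (t * z)` by `q * (a * P * t)`, as `m * q = P`.
  have shift : m d * (t * (z + a • q d ^ 2)) = m d * (t * z) + q d * (a * P * t) := by
    rw [← hmq d hd, nsmul_eq_mul]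
    ring
  exact ⟨hχ d hd z hz.1, shift ▸ hχ d hd _ (hz.2 _ (Set.mem_image_of_mem _ hd))⟩

end IsColorFocused

end ColorFocusing

theorem stmt5_general {R κ : Type*} [CommSemiring R] [NoZeroDivisors R] [CharZero R] [Finite κ]
    (χ : R → κ) {t : R} (ht : t ≠ 0) :
    ∃ x y, (x ≠ 0 ∧ t ∣ x) ∧ (y ≠ 0 ∧ t ∣ y) ∧ χ (x + y) = χ x ∧ χ (x * y) = χ x := by
  obtain ⟨K, ⟨P, A, hK⟩, hmax⟩ :=
    (Set.toFinite {K : Set κ | ∃ P A, IsColorFocused χ t P A K}).exists_maximal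
      ⟨∅, 1, {0}ᶜ, .empty⟩
  obtain ⟨c, ⟨z, hz, hPz⟩, hinsert⟩ := hK.exists_insert ht
  have hc : c ∈ K := hmax hinsert (Set.subset_insert c K) (Set.mem_insert c K)
  exact hK.exists_pattern ht hc hz hPz

theorem stmt5 (χ : Polynomial ℕ → Fin 3) :
    ∃ x y : Polynomial ℕ, InT x ∧ InT y ∧ χ (x + y) = χ x ∧ χ (x * y) = χ x := by
  simpa only [InT, Polynomial.X_dvd_iff] using stmt5_general χ Polynomial.X_ne_zero
end

section
/- For every finite coloring χ of T, every positive integer k, and every positive integer c_k, there exist positive integers c_0 ≥ c_1 ≥ ⋯ ≥ c_{k-1} ≥ c_k, elements b_1, …, b_k ∈ T, and an element x ∈ T with the following property. Setting a_i = b_1·b_2⋯b_i for 1 ≤ i ≤ k: for every i with 0 ≤ i < k and every nonzero good polynomial P in k − i variables of size at most c_i, the element (a_1·a_2⋯a_i)·x + P(a_{i+1}, b_{i+2}, b_{i+3}, …, b_k) receives the same color under χ as (a_1·a_2⋯a_i)·x (where for i = 0 the empty product is omitted, i.e., the elements compared are x + P(a_1, b_2, …, b_k) and x). -/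
/-- A nonzero good multivariate polynomial of size at most `c`: nonzero, zero constant
term, total degree at most `c`, and all coefficients at most `c`. -/
def GoodOfSize {σ : Type*} (c : ℕ) (P : MvPolynomial σ ℕ) : Prop :=
  P ≠ 0 ∧ MvPolynomial.coeff 0 P = 0 ∧ P.totalDegree ≤ c ∧ ∀ d, MvPolynomial.coeff d P ≤ c

/-!
Two inductions are combined. The first is a polynomial van der Waerden theorem in a commutative
ring `R`: given finitely many polynomials without constant term, every finite coloring of `R` has
a monochromatic configuration `{y} ∪ {y + p(d)}` with `d` and `y` taken from prescribed finite sets.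
It is proved by color focusing: moving the base point from `z` to `z - p₁(d')`, with `p₁` of
least degree, adds one focused color as soon as `d'` is good for all the differences
`x ↦ p(x + d) - p(d) - p₁(x)`. Count the degrees of a system once for each pair of a degree and a
leading coefficient; the system of differences has a smaller multiset of degrees. Applied to `ℤ[t]`
and translated, this gives the same statement for `T`.

The second induction appends the entries `b₁, b₂, …` one at a time. Only finitely many candidates
for `(b₁, …, b_k, x)` are needed for all colorings together, so there is a common multiple `N` of
all their multipliers `a₁ ⋯ aᵢ`. With `b_{k+1} = N d`, the value of `P` at the `i`-th tail changes
by `a₁ ⋯ aᵢ q(d)` for some `q` without constant term, which is the same as moving `x` by `q(d)`. A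
polynomial recurrence for all these `q` makes the change invisible to the coloring for every
candidate simultaneously, and afterwards a candidate that suits the coloring is chosen.
-/

open Polynomial
open scoped Pointwise

section Recurrence

variable {R : Type*} [Semiring R]

/-- Uniform polynomial recurrence of the finite system `F`: finitely many steps `d ∈ S` and base
points `y ∈ I` suffice to find, in every coloring of `R` with a given number of colors, a
monochromatic configuration `{y} ∪ {y + p(d) : p ∈ F}`. Keeping `S` and `I` apart lets the base
points be negative while the induction runs in a ring. -/
def PolyRecurrent (S I : Set R) (F : Finset R[X]) : Prop :=
  ∀ n : ℕ, ∃ D Y : Finset R, ↑D ⊆ S ∧ ↑Y ⊆ I ∧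
    ∀ χ : R → Fin n, ∃ d ∈ D, ∃ y ∈ Y, ∀ p ∈ F, χ (y + p.eval d) = χ y

lemma PolyRecurrent.exists_finset_forall {S I : Set R} {F : Finset R[X]}
    (h : PolyRecurrent S I F) (ι κ : Type*) [Finite ι] [Finite κ] :
    ∃ D Y : Finset R, ↑D ⊆ S ∧ ↑Y ⊆ I ∧ ∀ χ : ι → R → κ, ∃ d ∈ D, ∃ y ∈ Y,
      ∀ p ∈ F, ∀ i, χ i (y + p.eval d) = χ i y := by
  obtain ⟨n, ⟨e⟩⟩ := Finite.exists_equiv_fin (ι → κ)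
  obtain ⟨D, Y, hD, hY, hDY⟩ := h n
  refine ⟨D, Y, hD, hY, fun χ => ?_⟩
  obtain ⟨d, hd, y, hy, hdy⟩ := hDY fun z => e fun i => χ i z
  exact ⟨d, hd, y, hy, fun p hp => congrFun (e.injective (hdy p hp))⟩

lemma polyRecurrent_empty {S I : Set R} (hS : S.Nonempty) (hI : I.Nonempty) :
    PolyRecurrent S I ∅ := by
  obtain ⟨d, hd⟩ := hS
  obtain ⟨y, hy⟩ := hI
  exact fun _ => ⟨{d}, {y}, by simpa using hd, by simpa using hy, by simp⟩

lemma PolyRecurrent.of_erase_zero [DecidableEq R[X]] {S I : Set R} {F : Finset R[X]}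
    (h : PolyRecurrent S I (F.erase 0)) : PolyRecurrent S I F := by
  intro n
  obtain ⟨D, Y, hD, hY, hDY⟩ := h n
  refine ⟨D, Y, hD, hY, fun χ => ?_⟩
  obtain ⟨d, hd, y, hy, hdy⟩ := hDY χ
  refine ⟨d, hd, y, hy, fun p hp => ?_⟩
  by_cases hp0 : p = 0
  · simp [hp0]
  · exact hdy p (Finset.mem_erase.mpr ⟨hp0, hp⟩)

lemma exists_common_translate {M : Type*} [AddCommMonoid M] {S : AddSubsemigroup M}
    (hS : (S : Set M).Nonempty) (Y : Finset M) (hY : ∀ y ∈ Y, ∃ u ∈ S, y + u ∈ S) :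
    ∃ u ∈ S, ∀ y ∈ Y, y + u ∈ S := by
  classical
  induction Y using Finset.induction_on with
  | empty => simpa [Set.Nonempty] using hS
  | insert a Y _ ih =>
    obtain ⟨⟨v, hv, hav⟩, hY⟩ := Finset.forall_mem_insert _ _ _ |>.mp hY
    obtain ⟨u, hu, hYu⟩ := ih hY
    refine ⟨v + u, S.add_mem hv hu, Finset.forall_mem_insert _ _ _ |>.mpr ⟨?_, fun y hy => ?_⟩⟩
    · exact add_assoc a v u ▸ S.add_mem hav hu
    · exact add_left_comm y v u ▸ S.add_mem hv (hYu y hy)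

lemma PolyRecurrent.translate {S : AddSubsemigroup R} (hS : (S : Set R).Nonempty) {I : Set R}
    (hI : ∀ y ∈ I, ∃ u ∈ S, y + u ∈ S) {F : Finset R[X]} (h : PolyRecurrent S I F) :
    PolyRecurrent (S : Set R) S F := by
  classical
  intro n
  obtain ⟨D, Y, hD, hY, hDY⟩ := h n
  obtain ⟨u, -, hYu⟩ := exists_common_translate hS Y fun y hy => hI y (hY hy)
  refine ⟨D, Y.image (· + u), hD, by simpa [Set.subset_def] using hYu, fun χ => ?_⟩
  obtain ⟨d, hd, y, hy, hdy⟩ := hDY fun z => χ (z + u)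
  exact ⟨d, hd, y + u, Finset.mem_image_of_mem _ hy,
    fun p hp => (congrArg χ (add_right_comm _ _ _)).trans (hdy p hp)⟩

lemma PolyRecurrent.of_image {R' : Type*} [Semiring R'] {φ : R →+* R'}
    (hφ : Function.Injective φ) [DecidableEq R'[X]] {S I : Set R} {F : Finset R[X]}
    (h : PolyRecurrent (φ '' S) (φ '' I) (F.image (Polynomial.map φ))) :
    PolyRecurrent S I F := by
  classical
  intro n
  obtain ⟨D', Y', hD', hY', hDY⟩ := h n
  obtain ⟨D, hD, rfl⟩ := Finset.subset_set_image_iff.mp hD'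
  obtain ⟨Y, hY, rfl⟩ := Finset.subset_set_image_iff.mp hY'
  refine ⟨D, Y, hD, hY, fun χ => ?_⟩
  obtain ⟨d', hd', y', hy', hdy⟩ := hDY (χ ∘ Function.invFun φ)
  obtain ⟨d, hd, rfl⟩ := Finset.mem_image.mp hd'
  obtain ⟨y, hy, rfl⟩ := Finset.mem_image.mp hy'
  refine ⟨d, hd, y, hy, fun p hp => ?_⟩
  simpa only [eval_map_apply, ← map_add, Function.comp_apply,
    Function.leftInverse_invFun hφ _] using hdy _ (Finset.mem_image_of_mem _ hp)

/-- The color-focusing configuration: every color in `K` is attained by all the points `y + p(d)`,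
`p ∈ F`, for some step `d ∈ D`. -/
def IsFocused {κ : Type*} (χ : R → κ) (F : Finset R[X]) (D : Finset R) (y : R) (K : Finset κ) :
    Prop :=
  ∀ c ∈ K, ∃ d ∈ D, ∀ p ∈ F, χ (y + p.eval d) = c

lemma IsFocused.mono {κ : Type*} {χ : R → κ} {F : Finset R[X]} {D D' : Finset R} {y : R}
    {K : Finset κ} (h : IsFocused χ F D y K) (hD : D ⊆ D') : IsFocused χ F D' y K := fun c hc =>
  let ⟨d, hd, hdc⟩ := h c hc
  ⟨d, hD hd, hdc⟩

end Recurrence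

section ShiftDiff

variable {R : Type*} [CommRing R]

/-- The difference operator of polynomial exhaustion, the polynomial
`x ↦ p(x + d) - p(d) - p₁(x)`: passing from a system to all its shifted differences with a member
`p₁` of least degree lowers the complexity of the system. -/
noncomputable def shiftDiff (p₁ p : R[X]) (d : R) : R[X] :=
  taylor d p - C (p.eval d) - p₁

lemma eval_shiftDiff (p₁ p : R[X]) (d x : R) :
    (shiftDiff p₁ p d).eval x = p.eval (x + d) - p.eval d - p₁.eval x := by
  simp [shiftDiff, taylor_eval]

lemma coeff_zero_shiftDiff {p₁ : R[X]} (h₁ : p₁.coeff 0 = 0) (p : R[X]) (d : R) :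
    (shiftDiff p₁ p d).coeff 0 = 0 := by
  simp [shiftDiff, taylor_coeff_zero, h₁]

lemma natDegree_shiftDiff_le {p₁ p : R[X]} (hle : p₁.natDegree ≤ p.natDegree) (d : R) :
    (shiftDiff p₁ p d).natDegree ≤ p.natDegree := by
  refine natDegree_sub_le_of_le ?_ hle |>.trans_eq (max_self _)
  rw [natDegree_sub_C, natDegree_taylor]

lemma coeff_shiftDiff_natDegree {p : R[X]} (hp : 0 < p.natDegree) (p₁ : R[X]) (d : R) :
    (shiftDiff p₁ p d).coeff p.natDegree = p.leadingCoeff - p₁.coeff p.natDegree := by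
  rw [shiftDiff, coeff_sub, coeff_sub, coeff_C_of_ne_zero hp.ne', sub_zero,
    coeff_taylor_natDegree]

/-- The class of a polynomial in the sense of polynomial exhaustion: its degree together with its
leading coefficient. -/
noncomputable def degreeClass (p : R[X]) : ℕ × R := (p.natDegree, p.leadingCoeff)

lemma degreeClass_shiftDiff {p₁ p : R[X]} (hp : 0 < p.natDegree)
    (hle : p₁.natDegree ≤ p.natDegree) (hne : p.leadingCoeff ≠ p₁.coeff p.natDegree) (d : R) :
    degreeClass (shiftDiff p₁ p d) =
      (p.natDegree, p.leadingCoeff - p₁.coeff p.natDegree) := by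
  have hcoeff := coeff_shiftDiff_natDegree hp p₁ d
  have hdeg : (shiftDiff p₁ p d).natDegree = p.natDegree :=
    natDegree_eq_of_le_of_coeff_ne_zero (natDegree_shiftDiff_le hle d)
      (hcoeff ▸ sub_ne_zero.mpr hne)
  rw [degreeClass, leadingCoeff, hdeg, hcoeff]

lemma natDegree_shiftDiff_lt {p₁ p : R[X]} (hp : 0 < p.natDegree)
    (hclass : degreeClass p = degreeClass p₁) (d : R) :
    (shiftDiff p₁ p d).natDegree < p₁.natDegree := by
  obtain ⟨hdeg, hlead⟩ := Prod.ext_iff.mp hclass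
  simp only [degreeClass] at hdeg hlead
  have hzero : (shiftDiff p₁ p d).coeff p.natDegree = 0 := by
    rw [coeff_shiftDiff_natDegree hp, hlead, hdeg, coeff_natDegree, sub_self]
  have := natDegree_le_pred (natDegree_shiftDiff_le hdeg.ge d) hzero
  omega

lemma leadingCoeff_ne_coeff_natDegree {p₁ p : R[X]} (hp : p ≠ 0)
    (hle : p₁.natDegree ≤ p.natDegree) (hclass : degreeClass p ≠ degreeClass p₁) :
    p.leadingCoeff ≠ p₁.coeff p.natDegree := by
  intro h
  have hdeg : p.natDegree = p₁.natDegree :=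
    (le_natDegree_of_ne_zero (h ▸ leadingCoeff_ne_zero.mpr hp)).antisymm hle
  exact hclass (Prod.ext hdeg (by rw [degreeClass, degreeClass, h, hdeg, coeff_natDegree]))

/-- One class of degree `deg p₁` disappears, the other classes are translated, and all new classes
have smaller degree; hence the multiset of degrees decreases. -/
lemma exists_isDershowitzMannaLT_degreeClass_shiftDiff [DecidableEq R] {F : Finset R[X]}
    (hF : ∀ p ∈ F, 0 < p.natDegree) {p₁ : R[X]} (hp₁ : p₁ ∈ F)
    (hmin : ∀ p ∈ F, p₁.natDegree ≤ p.natDegree) {M : Multiset (ℕ × R)}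
    (hM : ∀ p ∈ F, degreeClass p ∈ M) (D : Finset R) :
    ∃ M' : Multiset (ℕ × R),
      Multiset.IsDershowitzMannaLT (M'.map Prod.fst) (M.map Prod.fst) ∧
      ∀ q ∈ Finset.image₂ (shiftDiff p₁) F D, degreeClass q ∈ M' := by
  set N := M.erase (degreeClass p₁)
  set L := ((Finset.image₂ (shiftDiff p₁) F D).filter fun q => q.natDegree < p₁.natDegree).val.map
    degreeClass with hL
  set N' := N.map fun u => (u.1, u.2 - p₁.coeff u.1)
  refine ⟨N' + L, ⟨N.map Prod.fst, L.map Prod.fst, {p₁.natDegree}, by simp, ?_, ?_, ?_⟩, ?_⟩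
  · simp [N']
  · rw [← Multiset.cons_erase (hM p₁ hp₁), Multiset.map_cons, ← Multiset.singleton_add, add_comm]
    rfl
  · intro e he
    simp only [hL, Multiset.map_map, Multiset.mem_map, Finset.mem_val, Finset.mem_filter] at he
    obtain ⟨q, ⟨-, hq⟩, rfl⟩ := he
    exact ⟨_, Multiset.mem_singleton_self _, hq⟩
  · intro q hq
    obtain ⟨p, hp, d, -, rfl⟩ := Finset.mem_image₂.mp hq
    rw [Multiset.mem_add]
    by_cases hclass : degreeClass p = degreeClass p₁
    · exact Or.inr (Multiset.mem_map_of_mem _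
        (Finset.mem_filter.mpr ⟨hq, natDegree_shiftDiff_lt (hF p hp) hclass d⟩))
    · have hne := leadingCoeff_ne_coeff_natDegree (ne_zero_of_natDegree_gt (hF p hp)) (hmin p hp)
        hclass
      rw [degreeClass_shiftDiff (hF p hp) (hmin p hp) hne]
      exact Or.inl (Multiset.mem_map.mpr
        ⟨_, (Multiset.mem_erase_of_ne hclass).mpr (hM p hp), rfl⟩)

end ShiftDiff

section PolynomialVanDerWaerden

variable {R : Type*} [CommRing R]

lemma eval_mem_of_coeff_zero {I : Ideal R} {p : R[X]} (hp : p.coeff 0 = 0) {d : R}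
    (hd : d ∈ I) : p.eval d ∈ I := by
  obtain ⟨q, rfl⟩ := X_dvd_iff.mpr hp
  simpa using I.mul_mem_right _ hd

/-- Moving the base point from `z` to `z - p₁(d')` adds the color of `z` to the focused colors:
there `d + d'` plays the role that `d` played at `z`, and `d = 0` contributes the new color. -/
lemma IsFocused.insert_of_shiftDiff [DecidableEq R] {κ : Type*} [DecidableEq κ] {χ : R → κ}
    {F : Finset R[X]} (hF : ∀ p ∈ F, p.coeff 0 = 0) {D : Finset R} {z : R} {K : Finset κ}
    (hK : IsFocused χ F D z K) {p₁ : R[X]} {d' : R}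
    (h : ∀ p ∈ F, ∀ d ∈ insert 0 D,
      χ (z + p.eval d + (shiftDiff p₁ p d).eval d') = χ (z + p.eval d)) :
    IsFocused χ F (insert d' (D + {d'})) (z - p₁.eval d') (insert (χ z) K) := by
  have hmove : ∀ p ∈ F, ∀ d ∈ insert 0 D,
      χ (z - p₁.eval d' + p.eval (d + d')) = χ (z + p.eval d) := by
    intro p hp d hd
    rw [← h p hp d hd, eval_shiftDiff, add_comm d d']
    congr 1
    ring
  intro c hc
  rcases Finset.mem_insert.mp hc with rfl | hcK
  · refine ⟨d', Finset.mem_insert_self _ _, fun p hp => ?_⟩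
    simpa only [zero_add, ← coeff_zero_eq_eval_zero, hF p hp, add_zero] using
      hmove p hp 0 (Finset.mem_insert_self 0 D)
  · obtain ⟨d, hd, hdc⟩ := hK c hcK
    exact ⟨d + d', Finset.mem_insert_of_mem (Finset.add_mem_add hd (Finset.mem_singleton_self d')),
      fun p hp => (hmove p hp d (Finset.mem_insert_of_mem hd)).trans (hdc p hp)⟩

lemma IsFocused.exists_card_succ [DecidableEq R] {κ : Type*} {χ : R → κ} {F : Finset R[X]}
    (hF : ∀ p ∈ F, p.coeff 0 = 0) {D D' : Finset R} {z : R} {K : Finset κ}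
    (hfoc : IsFocused χ F D z K) {r : ℕ} (hK : χ z ∈ K ∨ K.card = r) {p₁ : R[X]} {d' : R}
    (hd' : d' ∈ D')
    (h : ∀ p ∈ F, ∀ d ∈ insert 0 D,
      χ (z + p.eval d + (shiftDiff p₁ p d).eval d') = χ (z + p.eval d)) :
    ∃ x ∈ ({z, z - p₁.eval d'} : Finset R), ∃ K' : Finset κ,
      IsFocused χ F (D ∪ D' ∪ (D + D')) x K' ∧ (χ x ∈ K' ∨ K'.card = r + 1) := by
  classical
  by_cases hcolor : χ z ∈ K
  · have hsub : D ⊆ D ∪ D' ∪ (D + D') := Finset.subset_union_left.trans Finset.subset_union_left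
    exact ⟨z, by simp, K, hfoc.mono hsub, Or.inl hcolor⟩
  · have hsub : insert d' (D + {d'}) ⊆ D ∪ D' ∪ (D + D') :=
      Finset.insert_subset (Finset.mem_union_left _ (Finset.mem_union_right _ hd'))
        ((Finset.add_subset_add_left (Finset.singleton_subset_iff.mpr hd')).trans
          Finset.subset_union_right)
    refine ⟨z - p₁.eval d', by simp, _, (hfoc.insert_of_shiftDiff hF h).mono hsub, Or.inr ?_⟩
    rw [Finset.card_insert_of_notMem hcolor, hK.resolve_left hcolor]

lemma exists_isFocused_card [DecidableEq R] {S : AddSubsemigroup R} {I : Ideal R}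
    (hSI : ∀ d ∈ S, d ∈ I) {F : Finset R[X]} (hF : ∀ p ∈ F, p.coeff 0 = 0) {p₁ : R[X]}
    (hp₁ : p₁.coeff 0 = 0)
    (h : ∀ D : Finset R, PolyRecurrent (S : Set R) I (Finset.image₂ (shiftDiff p₁) F D))
    (κ : Type*) [Finite κ] (r : ℕ) :
    ∃ D Y : Finset R, (D : Set R) ⊆ S ∧ (Y : Set R) ⊆ I ∧ ∀ χ : R → κ, ∃ y ∈ Y, ∃ K : Finset κ,
      IsFocused χ F D y K ∧ (χ y ∈ K ∨ K.card = r) := by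
  induction r with
  | zero => exact ⟨∅, {0}, by simp, by simp, fun χ => ⟨0, by simp, ∅, by simp [IsFocused]⟩⟩
  | succ r ih =>
    obtain ⟨D, Y, hD, hY, hDY⟩ := ih
    set Z := Y + Finset.image₂ (fun p d => p.eval d) F (insert 0 D)
    obtain ⟨D', Y', hD', hY', hDY'⟩ := (h (insert 0 D)).exists_finset_forall Z κ
    have hsum : ((Y' + Y : Finset R) : Set R) ⊆ I := by
      rw [Finset.coe_add]
      exact Set.add_subset_iff.mpr fun a ha y hy => I.add_mem (hY' ha) (hY hy)
    refine ⟨D ∪ D' ∪ (D + D'), (Y' + Y) ∪ ((Y' + Y) - D'.image fun d => p₁.eval d),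
      ?_, ?_, fun χ => ?_⟩
    · rw [Finset.coe_union, Finset.coe_union, Finset.coe_add]
      exact Set.union_subset (Set.union_subset hD hD')
        (Set.add_subset_iff.mpr fun d hd d' hd' => S.add_mem (hD hd) (hD' hd'))
    · rw [Finset.coe_union, Finset.coe_sub, Finset.coe_image]
      refine Set.union_subset hsum (Set.sub_subset_iff.mpr fun z hz => ?_)
      exact Set.forall_mem_image.mpr fun d hd =>
        I.sub_mem (hsum hz) (eval_mem_of_coeff_zero hp₁ (hSI d (hD' hd)))
    · obtain ⟨d', hstep, a, ha, hrec⟩ := hDY' fun z x => χ (x + z)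
      obtain ⟨y, hy, K, hfoc, hK⟩ := hDY fun x => χ (a + x)
      have hz : a + y ∈ Y' + Y := Finset.add_mem_add ha hy
      have hfoc' : IsFocused χ F D (a + y) K := by simpa only [IsFocused, add_assoc] using hfoc
      obtain ⟨x, hx, hKx⟩ := hfoc'.exists_card_succ hF hK hstep fun p hp d hd => by
        have := hrec _ (Finset.mem_image₂_of_mem hp hd)
          ⟨y + p.eval d, Finset.add_mem_add hy (Finset.mem_image₂_of_mem hp hd)⟩
        simpa only [add_right_comm a _ (y + _), ← add_assoc] using this
      refine ⟨x, ?_, hKx⟩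
      rcases Finset.mem_insert.mp hx with rfl | hx
      · exact Finset.mem_union_left _ hz
      · rw [Finset.mem_singleton.mp hx]
        exact Finset.mem_union_right _ (Finset.sub_mem_sub hz (Finset.mem_image_of_mem _ hstep))

/-- Once more colors are focused than there are, the color of the base point is among them. -/
lemma polyRecurrent_of_shiftDiff [DecidableEq R] {S : AddSubsemigroup R} {I : Ideal R}
    (hSI : ∀ d ∈ S, d ∈ I) {F : Finset R[X]} (hF : ∀ p ∈ F, p.coeff 0 = 0) {p₁ : R[X]}
    (hp₁ : p₁.coeff 0 = 0)
    (h : ∀ D : Finset R, PolyRecurrent (S : Set R) I (Finset.image₂ (shiftDiff p₁) F D)) :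
    PolyRecurrent (S : Set R) I F := by
  intro n
  obtain ⟨D, Y, hD, hY, hDY⟩ := exists_isFocused_card hSI hF hp₁ h (Fin n) (n + 1)
  refine ⟨D, Y, hD, hY, fun χ => ?_⟩
  obtain ⟨y, hy, K, hfoc, hK⟩ := hDY χ
  have hcard : K.card ≤ n := by simpa using K.card_le_univ
  obtain ⟨d, hd, hdy⟩ := hfoc _ (hK.resolve_right (by omega))
  exact ⟨d, hd, y, hy, hdy⟩

lemma polyRecurrent_of_degreeClass_mem {S : AddSubsemigroup R} (hS : (S : Set R).Nonempty)
    {I : Ideal R} (hSI : ∀ d ∈ S, d ∈ I) (M : Multiset (ℕ × R)) (F : Finset R[X])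
    (hF : ∀ p ∈ F, p.coeff 0 = 0) (hM : ∀ p ∈ F, degreeClass p ∈ M) :
    PolyRecurrent (S : Set R) I F := by
  classical
  have hwf := InvImage.wf (Multiset.map (Prod.fst : ℕ × R → ℕ))
    Multiset.wellFounded_isDershowitzMannaLT
  induction M using hwf.induction generalizing F with
  | _ M ih =>
  refine PolyRecurrent.of_erase_zero ?_
  rcases (F.erase 0).eq_empty_or_nonempty with hE | hE
  · exact hE ▸ polyRecurrent_empty hS ⟨0, I.zero_mem⟩
  obtain ⟨p₁, hp₁, hmin⟩ := Finset.exists_min_image (F.erase 0) natDegree hE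
  have hF' : ∀ p ∈ F.erase 0, p.coeff 0 = 0 := fun p hp => hF p (Finset.mem_of_mem_erase hp)
  have hpos : ∀ p ∈ F.erase 0, 0 < p.natDegree := by
    refine fun p hp => Nat.pos_of_ne_zero fun h => Finset.ne_of_mem_erase hp ?_
    rw [eq_C_of_natDegree_eq_zero h, hF' p hp, C_0]
  refine polyRecurrent_of_shiftDiff hSI hF' (hF' p₁ hp₁) fun D => ?_
  obtain ⟨M', hlt, hM'⟩ := exists_isDershowitzMannaLT_degreeClass_shiftDiff hpos hp₁ hmin
    (fun p hp => hM p (Finset.mem_of_mem_erase hp)) D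
  refine ih M' hlt _ (fun q hq => ?_) hM'
  obtain ⟨p, -, d, -, rfl⟩ := Finset.mem_image₂.mp hq
  exact coeff_zero_shiftDiff (hF' p₁ hp₁) p d

theorem polyRecurrent_of_coeff_zero {S : AddSubsemigroup R} (hS : (S : Set R).Nonempty)
    {I : Ideal R} (hSI : ∀ d ∈ S, d ∈ I) {F : Finset R[X]} (hF : ∀ p ∈ F, p.coeff 0 = 0) :
    PolyRecurrent (S : Set R) I F :=
  polyRecurrent_of_degreeClass_mem hS hSI (F.val.map degreeClass) F hF fun _ hp =>
    Multiset.mem_map_of_mem _ hp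

end PolynomialVanDerWaerden

section GoodPolynomials

lemma InT.add {p q : ℕ[X]} (hp : InT p) (hq : InT q) : InT (p + q) := by
  refine ⟨fun h => hp.1 (Polynomial.ext fun m => ?_), by simp [hp.2, hq.2]⟩
  have hm : p.coeff m + q.coeff m = 0 := by rw [← coeff_add, h, coeff_zero]
  exact (Nat.add_eq_zero_iff.mp hm).1

lemma InT.mul {p q : ℕ[X]} (hp : InT p) (hq : InT q) : InT (p * q) :=
  ⟨mul_ne_zero hp.1 hq.1, by rw [mul_coeff_zero, hp.2, zero_mul]⟩

lemma inT_X_mul {p : ℕ[X]} (hp : p ≠ 0) : InT (X * p) :=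
  ⟨mul_ne_zero X_ne_zero hp, coeff_X_mul_zero p⟩

/-- The semiring `T` of the theorem, recorded as an additive subsemigroup since Mathlib's bundled
subsemirings contain `0`. -/
def goodPolynomials : AddSubsemigroup ℕ[X] where
  carrier := {p | InT p}
  add_mem' := InT.add

lemma exists_add_map_natCast_eq (q : ℤ[X]) :
    ∃ a b : ℕ[X], q + a.map (Nat.castRingHom ℤ) = b.map (Nat.castRingHom ℤ) := by
  induction q using Polynomial.induction_on' with
  | add p q hp hq =>
    obtain ⟨a, b, hab⟩ := hp
    obtain ⟨a', b', hab'⟩ := hq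
    exact ⟨a + a', b + b', by
      rw [Polynomial.map_add, Polynomial.map_add, add_add_add_comm, hab, hab']⟩
  | monomial m z =>
    refine ⟨monomial m (-z).toNat, monomial m z.toNat, ?_⟩
    rw [map_monomial, map_monomial, ← map_add]
    congr 1
    simp only [eq_natCast]
    lia

lemma exists_mem_goodPolynomials_add_mem {y : ℤ[X]} (hy : y ∈ Ideal.span {(X : ℤ[X])}) :
    ∃ u ∈ goodPolynomials.map (mapRingHom (Nat.castRingHom ℤ)),
      y + u ∈ goodPolynomials.map (mapRingHom (Nat.castRingHom ℤ)) := by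
  obtain ⟨q, rfl⟩ := Ideal.mem_span_singleton.mp hy
  obtain ⟨a, b, hab⟩ := exists_add_map_natCast_eq q
  have hne : ∀ r : ℕ[X], r + 1 ≠ 0 := fun r h => by
    simpa using congrArg (fun p : ℕ[X] => p.coeff 0) h
  refine ⟨_, ⟨X * (a + 1), inT_X_mul (hne a), rfl⟩, X * (b + 1), inT_X_mul (hne b), ?_⟩
  simp only [AddHom.coe_coe, coe_mapRingHom, Polynomial.map_mul,
    Polynomial.map_add, map_X, Polynomial.map_one, ← hab]
  ring

theorem polyRecurrent_goodPolynomials {F : Finset ℕ[X][X]} (hF : ∀ f ∈ F, f.coeff 0 = 0) :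
    PolyRecurrent (goodPolynomials : Set ℕ[X]) goodPolynomials F := by
  classical
  set φ : ℕ[X] →+* ℤ[X] := mapRingHom (Nat.castRingHom ℤ)
  have hS : ((goodPolynomials.map φ : AddSubsemigroup ℤ[X]) : Set ℤ[X]).Nonempty :=
    ⟨_, X * 1, inT_X_mul one_ne_zero, rfl⟩
  have hSI : ∀ d ∈ goodPolynomials.map φ, d ∈ Ideal.span {(X : ℤ[X])} := by
    rintro _ ⟨d, hd, rfl⟩
    obtain ⟨q, rfl⟩ := X_dvd_iff.mpr hd.2
    exact Ideal.mem_span_singleton.mpr ⟨φ q, by simp [φ]⟩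
  have hcoeff : ∀ p ∈ F.image (Polynomial.map φ), p.coeff 0 = 0 := by
    refine Finset.forall_mem_image.mpr fun f hf => ?_
    rw [coeff_map, hF f hf, map_zero]
  refine PolyRecurrent.of_image (φ := φ) (map_injective _ Nat.cast_injective) ?_
  exact (polyRecurrent_of_coeff_zero hS hSI hcoeff).translate hS
    fun _ hy => exists_mem_goodPolynomials_add_mem hy

end GoodPolynomials

section MonochromaticTails

variable {R : Type*} [CommSemiring R]

/-- The multiplier `a 1 * ⋯ * a i`, where `a j = b 1 * ⋯ * b j`. -/
def multiplier (b : ℕ → R) (i : ℕ) : R :=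
  ∏ j ∈ Finset.Icc 1 i, ∏ l ∈ Finset.Icc 1 j, b l

/-- The sequence `a (i + 1), b (i + 2), b (i + 3), …`, where `a j = b 1 * ⋯ * b j`. The paper's
finite sequences `b 1, …, b k` are continued by zeros, which makes the tails finite too. -/
def tailValues (b : ℕ → R) (i v : ℕ) : R :=
  if v = 0 then ∏ l ∈ Finset.Icc 1 (i + 1), b l else b (i + 1 + v)

lemma prod_Icc_update {b : ℕ → R} {j n : ℕ} (hj : j < n) (q : R) :
    ∏ l ∈ Finset.Icc 1 j, Function.update b n q l = ∏ l ∈ Finset.Icc 1 j, b l :=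
  Finset.prod_congr rfl fun _ hl =>
    Function.update_of_ne ((Finset.mem_Icc.mp hl).2.trans_lt hj).ne _ _

lemma multiplier_update {b : ℕ → R} {i n : ℕ} (hi : i < n) (q : R) :
    multiplier (Function.update b n q) i = multiplier b i :=
  Finset.prod_congr rfl fun _ hj => prod_Icc_update ((Finset.mem_Icc.mp hj).2.trans_lt hi) q

lemma tailValues_eq_zero {b : ℕ → R} {k : ℕ} (hb : ∀ l, k < l → b l = 0) :
    tailValues b k = 0 := by
  funext v
  rw [tailValues, Pi.zero_apply]
  split_ifs with hv
  · exact Finset.prod_eq_zero (Finset.right_mem_Icc.mpr (by lia)) (hb _ (by lia))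
  · exact hb _ (by lia)

/-- The new entry `q` occurs in position `k - i` only, with the coefficient `a k` if this is the
leading position. -/
lemma tailValues_update {b : ℕ → R} {k i : ℕ} (hi : i ≤ k) (hb : b (k + 1) = 0) (q : R) :
    tailValues (Function.update b (k + 1) q) i =
      tailValues b i +
        q • Pi.single (k - i) (if i = k then ∏ l ∈ Finset.Icc 1 k, b l else 1) := by
  funext v
  rw [Pi.add_apply, Pi.smul_apply, smul_eq_mul, tailValues, tailValues]
  rcases eq_or_ne v (k - i) with rfl | hv
  · rcases hi.eq_or_lt with rfl | hlt
    · simp [Finset.prod_Icc_succ_top, prod_Icc_update, hb, mul_comm]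
    · have hki : k - i ≠ 0 := by lia
      have hindex : i + 1 + (k - i) = k + 1 := by lia
      simp [hki, hlt.ne, hindex, hb]
  · have hne : i + 1 + v ≠ k + 1 := by lia
    rw [Pi.single_eq_of_ne hv, mul_zero, add_zero, Function.update_of_ne hne]
    split_ifs with hv0
    · exact prod_Icc_update (by lia) q
    · rfl

lemma exists_aeval_add_smul {A σ : Type*} [CommSemiring A] [Algebra A R] (P : MvPolynomial σ A)
    (e g : σ → R) (m : R) :
    ∃ Q : R[X], Q.coeff 0 = 0 ∧ ∀ d : R,
      MvPolynomial.aeval (e + (m * d) • g) P = MvPolynomial.aeval e P + m * Q.eval d := by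
  induction P using MvPolynomial.induction_on with
  | C r => exact ⟨0, by simp, fun d => by simp⟩
  | add p q hp hq =>
    obtain ⟨Q, hQ, hp⟩ := hp
    obtain ⟨Q', hQ', hq⟩ := hq
    refine ⟨Q + Q', by simp [hQ, hQ'], fun d => ?_⟩
    rw [map_add, map_add, hp, hq, eval_add]
    ring
  | mul_X p v hp =>
    obtain ⟨Q, hQ, hp⟩ := hp
    refine ⟨Q * C (e v) + (C (MvPolynomial.aeval e p) + C m * Q) * (C (g v) * X),
      by simp [hQ, mul_coeff_zero], fun d => ?_⟩
    rw [map_mul, map_mul, hp]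
    simp only [MvPolynomial.aeval_X, Pi.add_apply, Pi.smul_apply, smul_eq_mul, eval_add, eval_mul,
      eval_C, eval_X]
    ring

/-- Appending an entry divisible by the multiplier changes the value of `P` at the tail by the
multiplier times a polynomial without constant term, to which polynomial recurrence applies. -/
lemma exists_aeval_tailValues_update {A : Type*} [CommSemiring A] [Algebra A R]
    (P : MvPolynomial ℕ A) {b : ℕ → R} {k i : ℕ} (hi : i ≤ k) (hb : b (k + 1) = 0) {N : R}
    (hN : multiplier b i ∣ N) :
    ∃ Q : R[X], Q.coeff 0 = 0 ∧ ∀ d : R,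
      MvPolynomial.aeval (tailValues (Function.update b (k + 1) (N * d)) i) P =
        MvPolynomial.aeval (tailValues b i) P + multiplier b i * Q.eval d := by
  obtain ⟨h, rfl⟩ := hN
  obtain ⟨Q, hQ0, hQ⟩ := exists_aeval_add_smul P (tailValues b i)
    (h • Pi.single (k - i) (if i = k then ∏ l ∈ Finset.Icc 1 k, b l else 1)) (multiplier b i)
  refine ⟨Q, hQ0, fun d => ?_⟩
  rw [← hQ d, tailValues_update hi hb, smul_smul, mul_right_comm]

/-- The elements multiplying `S` into itself. Unlike `S` they include the empty product, which
occurs as the multiplier of index `0`. -/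
def selfMultipliers (S : Set R) : Submonoid R where
  carrier := {r | ∀ s ∈ S, r * s ∈ S}
  one_mem' s hs := (one_mul s).symm ▸ hs
  mul_mem' {a b} ha hb s hs := (mul_assoc a b s).symm ▸ ha _ (hb s hs)

lemma multiplier_mem_selfMultipliers {S : Set R} (hS : ∀ a ∈ S, ∀ b ∈ S, a * b ∈ S) {b : ℕ → R}
    {i : ℕ} (hb : ∀ l ∈ Finset.Icc 1 i, b l ∈ S) : multiplier b i ∈ selfMultipliers S :=
  prod_mem fun _ hj => prod_mem fun l hl => hS (b l) <|
    hb l (Finset.Icc_subset_Icc_right (Finset.mem_Icc.mp hj).2 hl)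

/-- Sequences `b 1, …, b k` of elements of `S`, continued by zeros. -/
def sequencesIn (S : Set R) (k : ℕ) : Set (ℕ → R) :=
  {b | (∀ l ∈ Finset.Icc 1 k, b l ∈ S) ∧ ∀ l, k < l → b l = 0}

lemma update_mem_sequencesIn {S : Set R} {k : ℕ} {b : ℕ → R} (hb : b ∈ sequencesIn S k) {q : R}
    (hq : q ∈ S) : Function.update b (k + 1) q ∈ sequencesIn S (k + 1) := by
  refine ⟨fun l hl => ?_, fun l hl => ?_⟩
  · rcases eq_or_ne l (k + 1) with rfl | hne
    · rwa [Function.update_self]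
    · rw [Function.update_of_ne hne]
      exact hb.1 l (by grind)
  · rw [Function.update_of_ne hl.ne']
    exact hb.2 l (by lia)

lemma exists_common_multiple {S : Set R} (hS : ∀ a ∈ S, ∀ b ∈ S, a * b ∈ S) {k : ℕ}
    (B : Finset (ℕ → R)) (hB : ↑B ⊆ sequencesIn S k) :
    ∃ N ∈ selfMultipliers S, ∀ b ∈ B, ∀ i ≤ k, multiplier b i ∣ N := by
  refine ⟨∏ b ∈ B, ∏ i ∈ Finset.range (k + 1), multiplier b i, ?_, fun b hb i hi => ?_⟩
  · refine prod_mem fun b hb => prod_mem fun i hi => ?_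
    exact multiplier_mem_selfMultipliers hS fun l hl => (hB hb).1 l (by grind)
  · exact (Finset.dvd_prod_of_mem (multiplier b) (Finset.mem_range_succ_iff.mpr hi)).trans
      (Finset.dvd_prod_of_mem (fun b => ∏ i ∈ Finset.range (k + 1), multiplier b i) hb)

/-- For the polynomials in `𝒜`, adding the value of any of them at any of the first `k` tails to
the corresponding multiple of `x` preserves the color. -/
def HasMonochromaticTails {A κ : Type*} [CommSemiring A] [Algebra A R] (χ : R → κ)
    (𝒜 : Finset (MvPolynomial ℕ A)) (k : ℕ) (b : ℕ → R) (x : R) : Prop :=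
  ∀ i < k, ∀ P ∈ 𝒜,
    χ (multiplier b i * x + MvPolynomial.aeval (tailValues b i) P) = χ (multiplier b i * x)

lemma HasMonochromaticTails.update {A κ : Type*} [CommSemiring A] [Algebra A R] {χ : R → κ}
    {𝒜 : Finset (MvPolynomial ℕ A)} (h𝒜 : ∀ P ∈ 𝒜, MvPolynomial.constantCoeff P = 0) {k : ℕ}
    {b : ℕ → R} (hb : ∀ l, k < l → b l = 0) {x q : R} (h : HasMonochromaticTails χ 𝒜 k b x)
    (hq : ∀ i ≤ k, ∀ P ∈ 𝒜,
      χ (multiplier b i * x +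
          MvPolynomial.aeval (tailValues (Function.update b (k + 1) q) i) P) =
        χ (multiplier b i * x + MvPolynomial.aeval (tailValues b i) P)) :
    HasMonochromaticTails χ 𝒜 (k + 1) (Function.update b (k + 1) q) x := by
  intro i hi P hP
  rw [multiplier_update hi, hq i (Nat.lt_succ_iff.mp hi) P hP]
  rcases (Nat.lt_succ_iff.mp hi).lt_or_eq with hlt | rfl
  · exact h i hlt P hP
  · rw [tailValues_eq_zero hb, MvPolynomial.aeval_zero, h𝒜 P hP, map_zero, add_zero]

/-- The entries `q` are common multiples of all multipliers in play times the steps of a polynomial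
recurrence, and the points `z` are its base points. -/
lemma exists_finset_forall_tailValues_update {A : Type*} [CommSemiring A] [Algebra A R]
    {S : AddSubsemigroup R} (hS : ∀ a ∈ S, ∀ b ∈ S, a * b ∈ S)
    (hrec : ∀ F : Finset R[X], (∀ p ∈ F, p.coeff 0 = 0) → PolyRecurrent (S : Set R) S F)
    (𝒜 : Finset (MvPolynomial ℕ A)) (κ : Type*) [Finite κ] {k : ℕ} (W : Finset ((ℕ → R) × R))
    (hW : ∀ w ∈ W, w.1 ∈ sequencesIn (S : Set R) k) :
    ∃ E Y : Finset R, (E : Set R) ⊆ S ∧ (Y : Set R) ⊆ S ∧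
      ∀ (χ : R → κ) (y : R), ∃ q ∈ E, ∃ z ∈ Y, ∀ w ∈ W, ∀ i ≤ k, ∀ P ∈ 𝒜,
        χ (multiplier w.1 i * (w.2 + (z + y)) +
            MvPolynomial.aeval (tailValues (Function.update w.1 (k + 1) q) i) P) =
          χ (multiplier w.1 i * (w.2 + (z + y)) + MvPolynomial.aeval (tailValues w.1 i) P) := by
  classical
  obtain ⟨N, hN, hdvd⟩ := exists_common_multiple hS (k := k) (W.image Prod.fst) (by
    rw [Finset.coe_image, Set.image_subset_iff]
    exact hW)
  have hchange : ∀ w ∈ W, ∀ i ≤ k, ∀ P : MvPolynomial ℕ A, ∃ Q : R[X], Q.coeff 0 = 0 ∧ ∀ d : R,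
      MvPolynomial.aeval (tailValues (Function.update w.1 (k + 1) (N * d)) i) P =
        MvPolynomial.aeval (tailValues w.1 i) P + multiplier w.1 i * Q.eval d :=
    fun w hw i hi P => exists_aeval_tailValues_update P hi ((hW w hw).2 _ k.lt_succ_self)
      (hdvd _ (Finset.mem_image_of_mem _ hw) i hi)
  choose! Q hQ0 hQ using hchange
  set U := W ×ˢ Finset.range (k + 1) ×ˢ 𝒜
  have hU : ∀ p ∈ U.image fun u => Q u.1 u.2.1 u.2.2, p.coeff 0 = 0 := by
    refine Finset.forall_mem_image.mpr fun u hu => ?_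
    simp only [U, Finset.mem_product, Finset.mem_range_succ_iff] at hu
    exact hQ0 _ hu.1 _ hu.2.1 _
  obtain ⟨D, Y, hD, hY, hDY⟩ := (hrec _ hU).exists_finset_forall U κ
  refine ⟨D.image (N * ·), Y, ?_, hY, fun χ y => ?_⟩
  · rw [Finset.coe_image, Set.image_subset_iff]
    exact fun d hd => hN d (hD hd)
  · obtain ⟨d, hd, z, hz, hdz⟩ := hDY fun u z => χ (multiplier u.1.1.1 u.1.2.1 *
      (u.1.1.2 + (z + y)) + MvPolynomial.aeval (tailValues u.1.1.1 u.1.2.1) u.1.2.2)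
    refine ⟨N * d, Finset.mem_image_of_mem _ hd, z, hz, fun w hw i hi P hP => ?_⟩
    have hu : (w, i, P) ∈ U := by simp [U, hw, hP, Nat.lt_succ_of_le hi]
    rw [hQ w hw i hi P d, ← hdz _ (Finset.mem_image_of_mem _ hu) ⟨_, hu⟩]
    congr 1
    ring

/-- The offset `y` lets the induction hypothesis be applied after `x` has been translated by the
base point of a recurrence. -/
theorem exists_finset_hasMonochromaticTails {A : Type*} [CommSemiring A] [Algebra A R]
    {S : AddSubsemigroup R} (hS : ∀ a ∈ S, ∀ b ∈ S, a * b ∈ S)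
    (hrec : ∀ F : Finset R[X], (∀ p ∈ F, p.coeff 0 = 0) → PolyRecurrent (S : Set R) S F)
    (𝒜 : Finset (MvPolynomial ℕ A)) (h𝒜 : ∀ P ∈ 𝒜, MvPolynomial.constantCoeff P = 0)
    (κ : Type*) [Finite κ] (k : ℕ) :
    ∃ W : Finset ((ℕ → R) × R), ↑W ⊆ sequencesIn (S : Set R) k ×ˢ (S : Set R) ∧
      ∀ (χ : R → κ) (y : R), ∃ w ∈ W, HasMonochromaticTails χ 𝒜 k w.1 (w.2 + y) := by
  classical
  induction k with
  | zero =>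
    obtain ⟨D, Y, hD, -, hDY⟩ := hrec ∅ (by simp) 1
    obtain ⟨s, hs, -⟩ := hDY 0
    exact ⟨{(0, s)}, by simpa [sequencesIn] using hD hs, by simp [HasMonochromaticTails]⟩
  | succ k ih =>
    obtain ⟨W, hW, hWχ⟩ := ih
    obtain ⟨E, Y, hE, hY, hEY⟩ :=
      exists_finset_forall_tailValues_update hS hrec 𝒜 κ W fun w hw => (hW hw).1
    refine ⟨Finset.image₂ (fun w u => (Function.update w.1 (k + 1) u.1, w.2 + u.2)) W (E ×ˢ Y),
      ?_, fun χ y => ?_⟩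
    · rw [Finset.coe_image₂, Set.image2_subset_iff]
      intro w hw u hu
      obtain ⟨hq, hz⟩ := Finset.mem_product.mp hu
      exact ⟨update_mem_sequencesIn (hW hw).1 (hE hq), S.add_mem (hW hw).2 (hY hz)⟩
    · obtain ⟨q, hq, z, hz, hqz⟩ := hEY χ y
      obtain ⟨w, hw, htails⟩ := hWχ χ (z + y)
      refine ⟨_, Finset.mem_image₂_of_mem hw (Finset.mk_mem_product hq hz), ?_⟩
      rw [add_assoc]
      exact htails.update h𝒜 (hW hw).1.2 (hqz w hw)

end MonochromaticTails

section BoundedSize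

lemma finite_setOf_goodOfSize (σ : Type*) [Finite σ] (c : ℕ) :
    {P : MvPolynomial σ ℕ | GoodOfSize c P}.Finite := by
  have : Finite {d : σ →₀ ℕ | d.degree ≤ c} := Finsupp.finite_of_degree_le c
  refine Set.Finite.of_finite_image (f := fun P (d : {d : σ →₀ ℕ | d.degree ≤ c}) =>
    MvPolynomial.coeff d.1 P) ((Set.Finite.pi' fun _ => Set.finite_Iic c).subset ?_) ?_
  · rintro _ ⟨P, hP, rfl⟩ d
    exact hP.2.2.2 d.1
  · have hzero : ∀ P : MvPolynomial σ ℕ, GoodOfSize c P → ∀ d : σ →₀ ℕ, ¬ d.degree ≤ c →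
        MvPolynomial.coeff d P = 0 := fun P hP d hd =>
      MvPolynomial.coeff_eq_zero_of_totalDegree_lt (hP.2.2.1.trans_lt (not_le.mp hd))
    intro P hP P' hP' h
    ext d
    by_cases hd : d.degree ≤ c
    · exact congrFun h ⟨d, hd⟩
    · rw [hzero P hP d hd, hzero P' hP' d hd]

lemma exists_finset_rename_goodOfSize (c k : ℕ) :
    ∃ 𝒜 : Finset (MvPolynomial ℕ ℕ), (∀ P ∈ 𝒜, MvPolynomial.constantCoeff P = 0) ∧
      ∀ m ≤ k, ∀ P : MvPolynomial (Fin m) ℕ, GoodOfSize c P →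
        MvPolynomial.rename Fin.val P ∈ 𝒜 := by
  classical
  refine ⟨(Finset.range (k + 1)).biUnion fun m =>
    (finite_setOf_goodOfSize (Fin m) c).toFinset.image (MvPolynomial.rename Fin.val),
    fun P hP => ?_, fun m hm P hP => ?_⟩
  · simp only [Finset.mem_biUnion, Finset.mem_image, Set.Finite.mem_toFinset] at hP
    obtain ⟨m, -, P, hP, rfl⟩ := hP
    rw [MvPolynomial.constantCoeff_rename, MvPolynomial.constantCoeff_eq]
    exact hP.2.1
  · exact Finset.mem_biUnion.mpr ⟨m, Finset.mem_range_succ_iff.mpr hm,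
      Finset.mem_image_of_mem _ ((Set.Finite.mem_toFinset _).mpr hP)⟩

end BoundedSize

theorem stmt6 (n : ℕ) (χ : Polynomial ℕ → Fin n) (k : ℕ) (hk : 0 < k)
    (ck : ℕ) (hck : 0 < ck) :
    ∃ c : ℕ → ℕ,
      (∀ i ≤ k, 0 < c i) ∧ (∀ i < k, c (i + 1) ≤ c i) ∧ c k = ck ∧
      ∃ b : ℕ → Polynomial ℕ, (∀ i, 1 ≤ i → i ≤ k → InT (b i)) ∧
      ∃ x : Polynomial ℕ, InT x ∧
        -- with `a i = b 1 * b 2 * ⋯ * b i = ∏ l ∈ Finset.Icc 1 i, b l`,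
        -- for every `0 ≤ i < k` and every nonzero good polynomial `P` in `k - i`
        -- variables of size at most `c i`, the element
        -- `(a 1 * ⋯ * a i) * x + P (a (i+1), b (i+2), …, b k)` has the same color
        -- as `(a 1 * ⋯ * a i) * x`.
        ∀ i < k, ∀ P : MvPolynomial (Fin (k - i)) ℕ, GoodOfSize (c i) P →
          χ ((∏ j ∈ Finset.Icc 1 i, ∏ l ∈ Finset.Icc 1 j, b l) * x +
              MvPolynomial.aeval
                (fun v : Fin (k - i) =>
                  if (v : ℕ) = 0 then ∏ l ∈ Finset.Icc 1 (i + 1), b l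
                  else b (i + 1 + (v : ℕ))) P) =
            χ ((∏ j ∈ Finset.Icc 1 i, ∏ l ∈ Finset.Icc 1 j, b l) * x) := by
  obtain ⟨𝒜, h𝒜, hmem⟩ := exists_finset_rename_goodOfSize ck k
  obtain ⟨W, hW, hWχ⟩ := exists_finset_hasMonochromaticTails (S := goodPolynomials)
    (fun _ ha _ hb => InT.mul ha hb) (fun _ => polyRecurrent_goodPolynomials) 𝒜 h𝒜 (Fin n) k
  obtain ⟨⟨b, x⟩, hw, htails⟩ := hWχ χ 0
  obtain ⟨hb, hx⟩ := hW hw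
  rw [add_zero] at htails
  refine ⟨fun _ => ck, fun _ _ => hck, fun _ _ => le_rfl, rfl, b,
    fun i h1 hik => hb.1 i (Finset.mem_Icc.mpr ⟨h1, hik⟩), x, hx, fun i hi P hP => ?_⟩
  have hcolor := htails i hi _ (hmem (k - i) (k.sub_le i) P hP)
  rwa [MvPolynomial.aeval_rename] at hcolor
end
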